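/- The number of partitions of n into perfect squares satisfies p₄(n) ~ (ζ(3/2)^{2/3} / (2^{7/3} √3 π^{7/6} n^{7/6})) · exp( (3/2^{4/3}) π^{1/3} ζ(3/2)^{2/3} n^{1/3} ) as n → ∞. -/

import Mathlib

open Filter Topology

/-- `ζ(3/2)` as a real series. -/
noncomputable def zetaThreeHalves : ℝ := ∑' m : ℕ, ((m + 1 : ℝ)) ^ (-(3 / 2 : ℝ))

/-- The number of partitions of `n` into perfect squares. -/
noncomputable def pSq (n : ℕ) : ℕ :=
  Nat.card {q : Nat.Partition n // ∀ i ∈ q.parts, ∃ m : ℕ, 1 ≤ m ∧ i = m ^ 2}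

/-!
For `Re z > 0` let `logGenFun z` be the logarithm of the generating function at `q = exp (-z)`, so
that `pSq n` is the Cauchy integral of `exp (logGenFun z + n * z)` over `Re z = t`, `|Im z| ≤ π`.

Near `0`, as long as `z / Re z → 1`,
`logGenFun z = C z ^ (-1/2) + log z / 2 - log (2π) + o(1)` with `C = √π ζ(3/2) / 2`.
Indeed the functional equation of the theta series turns `logGenFun z = ∑ₖ squareTheta (k z) / k`
into elementary series and a Riemann sum, and the constant term comes out of Euler's product
for `sinh`. Away from the positive axis the integrand is small because the squares
`m ^ 2 * Im z` cannot all be close to multiples of `2π`: their second difference is constant.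

At the saddle point `t = τ ^ 4`, where `n τ ^ 6 = C / 2`, the substitution `Im z = τ ^ 5 s` cancels
the terms linear in `s`. By dominated convergence the rescaled integrals tend to the Gaussian
integral of `exp (-(3/8) C s ^ 2)`.
-/

namespace SquarePartition

open scoped Real

section GeneratingFunction

open Finset PowerSeries
open Nat.Partition (restricted)

variable {𝕜 : Type*}

/-- `HasAbsEval f q v`: the power series `f` converges absolutely at `q`, with value `v`. Formal
product formulas for generating functions become analytic ones through this notion. -/
def HasAbsEval [NormedField 𝕜] (f : 𝕜⟦X⟧) (q v : 𝕜) : Prop :=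
  Summable (fun n ↦ ‖coeff n f * q ^ n‖) ∧ HasSum (fun n ↦ coeff n f * q ^ n) v

theorem hasAbsEval_one [NormedField 𝕜] (q : 𝕜) : HasAbsEval 1 q 1 := by
  have hzero : ∀ n ≠ 0, coeff n (1 : 𝕜⟦X⟧) * q ^ n = 0 := fun n hn ↦ by simp [coeff_one, hn]
  constructor
  · refine summable_of_ne_finset_zero (s := {0}) fun n hn ↦ ?_
    rw [hzero n (by simpa using hn), norm_zero]
  · simpa using hasSum_single 0 hzero

theorem HasAbsEval.mul [NormedField 𝕜] [CompleteSpace 𝕜] {f g : 𝕜⟦X⟧} {q v w : 𝕜}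
    (hf : HasAbsEval f q v) (hg : HasAbsEval g q w) : HasAbsEval (f * g) q (v * w) := by
  have hcoeff : ∀ n, coeff n (f * g) * q ^ n =
      ∑ kl ∈ antidiagonal n, (coeff kl.1 f * q ^ kl.1) * (coeff kl.2 g * q ^ kl.2) := by
    intro n
    rw [coeff_mul, sum_mul]
    refine sum_congr rfl fun kl hkl ↦ ?_
    rw [← mem_antidiagonal.mp hkl, pow_add]
    ring
  have hsummable : Summable fun n ↦ ‖coeff n (f * g) * q ^ n‖ := by
    simpa only [hcoeff] using summable_norm_sum_mul_antidiagonal_of_summable_norm hf.1 hg.1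
  refine ⟨hsummable, ?_⟩
  rw [hsummable.of_norm.hasSum_iff, ← hf.2.tsum_eq, ← hg.2.tsum_eq,
    tsum_mul_tsum_eq_tsum_sum_antidiagonal_of_summable_norm hf.1 hg.1]
  exact tsum_congr hcoeff

theorem HasAbsEval.prod [NormedField 𝕜] [CompleteSpace 𝕜] {ι : Type*} {f : ι → 𝕜⟦X⟧} {q : 𝕜}
    {v : ι → 𝕜} (s : Finset ι) (h : ∀ i ∈ s, HasAbsEval (f i) q (v i)) :
    HasAbsEval (∏ i ∈ s, f i) q (∏ i ∈ s, v i) := by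
  classical
  induction s using Finset.induction_on with
  | empty => exact hasAbsEval_one q
  | insert i s hi ih =>
    rw [prod_insert hi, prod_insert hi]
    exact (h i (mem_insert_self i s)).mul (ih fun j hj ↦ h j (mem_insert_of_mem hj))

open scoped PowerSeries.WithPiTopology in
theorem coeff_tsum_X_pow_mul [CommSemiring 𝕜] [TopologicalSpace 𝕜] [T2Space 𝕜] {d : ℕ}
    (hd : 0 < d) (n : ℕ) :
    coeff n (∑' j : ℕ, (X : 𝕜⟦X⟧) ^ (d * j)) = if d ∣ n then 1 else 0 := by
  have hs : Summable fun j : ℕ ↦ (X : 𝕜⟦X⟧) ^ (d * j) := by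
    simp_rw [pow_mul]
    exact WithPiTopology.summable_pow_of_constantCoeff_eq_zero (by simp [hd.ne'])
  rw [hs.map_tsum _ (WithPiTopology.continuous_coeff 𝕜 n)]
  simp_rw [coeff_X_pow]
  split_ifs with hdvd
  · obtain ⟨c, rfl⟩ := hdvd
    rw [tsum_eq_single c fun j hj ↦ if_neg fun h ↦ hj (Nat.eq_of_mul_eq_mul_left hd h).symm,
      if_pos rfl]
  · exact (tsum_congr fun j ↦ if_neg fun h ↦ hdvd ⟨j, h⟩).trans tsum_zero

open scoped PowerSeries.WithPiTopology in
theorem hasAbsEval_tsum_X_pow_mul [NormedField 𝕜] {q : 𝕜} (hq : ‖q‖ < 1) {d : ℕ} (hd : 0 < d) :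
    HasAbsEval (∑' j : ℕ, (X : 𝕜⟦X⟧) ^ (d * j)) q (1 - q ^ d)⁻¹ := by
  have hqd : ‖q ^ d‖ < 1 := by
    rw [norm_pow]
    exact pow_lt_one₀ (norm_nonneg _) hq hd.ne'
  simp only [HasAbsEval, coeff_tsum_X_pow_mul hd]
  constructor
  · refine (summable_geometric_of_lt_one (norm_nonneg q) hq).of_nonneg_of_le
      (fun _ ↦ norm_nonneg _) fun n ↦ ?_
    split_ifs <;> simp
  · rw [← (mul_right_injective₀ hd.ne').hasSum_iff]
    · simpa [Function.comp_def, pow_mul] using hasSum_geometric_of_norm_lt_one hqd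
    · rintro n hn
      rw [if_neg, zero_mul]
      rintro ⟨c, rfl⟩
      exact hn ⟨c, rfl⟩

theorem restricted_subset_restricted (n : ℕ) {p r : ℕ → Prop} [DecidablePred p]
    [DecidablePred r] (h : ∀ i, p i → r i) : restricted n p ⊆ restricted n r :=
  monotone_filter_right _ fun _ _ hx i hi ↦ h i (hx i hi)

variable (p : ℕ → Prop) [DecidablePred p]

theorem card_restricted_and_le {n M : ℕ} (h : n ≤ M) :
    #(restricted n fun i ↦ p i ∧ i ≤ M) = #(restricted n p) := by
  refine congrArg card (filter_congr fun x _ ↦ ?_)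
  refine ⟨fun hx i hi ↦ (hx i hi).1, fun hx i hi ↦ ⟨hx i hi, ?_⟩⟩
  calc i ≤ x.parts.sum := Multiset.single_le_sum (fun _ _ ↦ Nat.zero_le _) _ hi
    _ = n := x.parts_sum
    _ ≤ M := h

open scoped PowerSeries.WithPiTopology in
theorem hasAbsEval_card_restricted_and_le [NormedField 𝕜] [CompleteSpace 𝕜] {q : 𝕜}
    (hq : ‖q‖ < 1) (M : ℕ) :
    HasAbsEval (PowerSeries.mk fun n ↦ (#(restricted n fun i ↦ p i ∧ i ≤ M) : 𝕜)) q
      (∏ i ∈ range M, if p (i + 1) then (1 - q ^ (i + 1))⁻¹ else 1) := by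
  have hprod := Nat.Partition.hasProd_powerSeriesMk_card_restricted 𝕜 fun i ↦ p i ∧ i ≤ M
  rw [hprod.unique (hasProd_prod_of_ne_finset_one (s := range M) fun i hi ↦
    if_neg fun h ↦ hi (mem_range.mpr h.2))]
  refine HasAbsEval.prod _ fun i hi ↦ ?_
  have hle : i + 1 ≤ M := mem_range.mp hi
  simp only [hle, and_true]
  split_ifs
  exacts [hasAbsEval_tsum_X_pow_mul hq i.succ_pos, hasAbsEval_one q]

theorem multipliable_ite_inv_one_sub_pow [NormedField 𝕜] [CompleteSpace 𝕜] {q : 𝕜}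
    (hq : ‖q‖ < 1) : Multipliable fun i ↦ if p (i + 1) then (1 - q ^ (i + 1))⁻¹ else 1 := by
  have hfactor : ∀ i, ‖(if p (i + 1) then (1 - q ^ (i + 1))⁻¹ else 1) - 1‖ ≤
      ‖q‖ ^ i * (1 - ‖q‖)⁻¹ := by
    intro i
    have hpow : ‖q‖ ^ (i + 1) ≤ ‖q‖ := pow_le_of_le_one (norm_nonneg _) hq.le i.succ_ne_zero
    have hnorm : 1 - ‖q‖ ≤ ‖1 - q ^ (i + 1)‖ := by
      have := norm_sub_norm_le 1 (q ^ (i + 1))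
      rw [norm_one, norm_pow] at this
      linarith
    have hpos : 0 < 1 - ‖q‖ := sub_pos.mpr hq
    have hne : 1 - q ^ (i + 1) ≠ 0 := norm_pos_iff.mp (hpos.trans_le hnorm)
    split_ifs
    · rw [show (1 - q ^ (i + 1))⁻¹ - 1 = q ^ (i + 1) * (1 - q ^ (i + 1))⁻¹ by field_simp; ring,
        norm_mul, norm_inv, norm_pow]
      gcongr ?_ * ?_⁻¹
      exact pow_le_pow_of_le_one (norm_nonneg _) hq.le i.le_succ
    · rw [sub_self, norm_zero]
      positivity
  have := multipliable_one_add_of_summable <|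
    ((summable_geometric_of_lt_one (norm_nonneg q) hq).mul_right _).of_nonneg_of_le
      (fun _ ↦ norm_nonneg _) hfactor
  simpa only [add_sub_cancel] using this

theorem summable_card_restricted_mul_pow {r : ℝ} (hr₀ : 0 ≤ r) (hr₁ : r < 1) :
    Summable fun n ↦ (#(restricted n p) : ℝ) * r ^ n := by
  have hr : ‖r‖ < 1 := by rwa [Real.norm_of_nonneg hr₀]
  obtain ⟨B, hB⟩ := (multipliable_ite_inv_one_sub_pow p hr).tendsto_prod_tprod_nat.bddAbove_range
  refine summable_of_sum_range_le (c := B) (fun n ↦ by positivity) fun M ↦ ?_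
  have heval := (hasAbsEval_card_restricted_and_le p hr M).2
  simp only [coeff_mk] at heval
  calc ∑ n ∈ range M, (#(restricted n p) : ℝ) * r ^ n
      = ∑ n ∈ range M, (#(restricted n fun i ↦ p i ∧ i ≤ M) : ℝ) * r ^ n :=
        sum_congr rfl fun n hn ↦ by rw [card_restricted_and_le p (mem_range.mp hn).le]
    _ ≤ _ := sum_le_hasSum _ (fun n _ ↦ by positivity) heval
    _ ≤ B := hB ⟨M, rfl⟩

theorem hasSum_card_restricted_mul_pow [RCLike 𝕜] {q : 𝕜} (hq : ‖q‖ < 1) :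
    HasSum (fun n ↦ (#(restricted n p) : 𝕜) * q ^ n)
      (∏' i, if p (i + 1) then (1 - q ^ (i + 1))⁻¹ else 1) := by
  have hmajorant := summable_card_restricted_mul_pow p (norm_nonneg q) hq
  have hsummable : Summable fun n ↦ (#(restricted n p) : 𝕜) * q ^ n :=
    .of_norm <| hmajorant.congr fun n ↦ by rw [norm_mul, norm_pow, RCLike.norm_natCast]
  have htruncated := tendsto_tsum_of_dominated_convergence (𝓕 := atTop)
    (f := fun M n ↦ (#(restricted n fun i ↦ p i ∧ i ≤ M) : 𝕜) * q ^ n)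
    (g := fun n ↦ (#(restricted n p) : 𝕜) * q ^ n) hmajorant
    (fun n ↦ tendsto_const_nhds.congr' <| (eventually_ge_atTop n).mono fun M hM ↦ by
      simp only [card_restricted_and_le p hM])
    (.of_forall fun M n ↦ by
      rw [norm_mul, norm_pow, RCLike.norm_natCast]
      gcongr
      exact restricted_subset_restricted n fun i hi ↦ hi.1)
  have heval (M : ℕ) : ∑' n, (#(restricted n fun i ↦ p i ∧ i ≤ M) : 𝕜) * q ^ n =
      ∏ i ∈ range M, if p (i + 1) then (1 - q ^ (i + 1))⁻¹ else 1 := by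
    simpa only [coeff_mk] using (hasAbsEval_card_restricted_and_le p hq M).2.tsum_eq
  simp only [heval] at htruncated
  rw [hsummable.hasSum_iff]
  exact tendsto_nhds_unique htruncated
    (multipliable_ite_inv_one_sub_pow p hq).tendsto_prod_tprod_nat

end GeneratingFunction

section LogGeneratingFunction

open Complex (I)

/-- The one-sided theta series `∑_{m ≥ 1} exp (-m² z)`, the sum of the squares' powers of
`q = exp (-z)`. -/
noncomputable def squareTheta (z : ℂ) : ℂ := ∑' m : ℕ, Complex.exp (-((m + 1 : ℂ) ^ 2 * z))

/-- The logarithm `∑_{k ≥ 1} squareTheta (k z) / k` of the generating function of the partitions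
into squares, at `q = exp (-z)`. -/
noncomputable def logGenFun (z : ℂ) : ℂ := ∑' k : ℕ, squareTheta ((k + 1 : ℂ) * z) / (k + 1 : ℂ)

/-- The term of index `(k, m)`, both counted from `0`, of the double series for `logGenFun`. -/
noncomputable def logGenTerm (z : ℂ) (p : ℕ × ℕ) : ℂ :=
  Complex.exp (-((p.2 + 1 : ℂ) ^ 2 * ((p.1 + 1 : ℂ) * z))) / (p.1 + 1 : ℂ)

theorem norm_exp_neg_lt_one {z : ℂ} (hz : 0 < z.re) : ‖Complex.exp (-z)‖ < 1 := by
  rwa [Complex.norm_exp, Real.exp_lt_one_iff, Complex.neg_re, neg_lt_zero]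

theorem exp_neg_natCast_mul (n : ℕ) (z : ℂ) :
    Complex.exp (-(n * z)) = Complex.exp (-z) ^ n := by
  rw [← Complex.exp_nat_mul, mul_neg]

theorem exp_neg_sq_mul (m : ℕ) (z : ℂ) :
    Complex.exp (-((m + 1 : ℂ) ^ 2 * z)) = Complex.exp (-z) ^ (m + 1) ^ 2 := by
  rw [← exp_neg_natCast_mul]
  push_cast
  rfl

theorem logGenTerm_eq_pow_div (z : ℂ) (k m : ℕ) :
    logGenTerm z (k, m) = (Complex.exp (-z) ^ (m + 1) ^ 2) ^ (k + 1) / ((k + 1 : ℕ) : ℂ) := by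
  rw [logGenTerm, exp_neg_sq_mul, pow_right_comm, ← exp_neg_natCast_mul (k + 1)]
  push_cast
  rfl

theorem summable_norm_logGenTerm {z : ℂ} (hz : 0 < z.re) :
    Summable fun p ↦ ‖logGenTerm z p‖ := by
  have hq := norm_exp_neg_lt_one hz
  have hgeom := summable_geometric_of_lt_one (norm_nonneg (Complex.exp (-z))) hq
  refine (hgeom.mul_of_nonneg hgeom (fun k ↦ by positivity) fun m ↦ by positivity).of_nonneg_of_le
    (fun p ↦ norm_nonneg _) fun ⟨k, m⟩ ↦ ?_
  have hexponent : k + m ≤ (m + 1) ^ 2 * (k + 1) := by nlinarith [Nat.zero_le (m * k)]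
  calc ‖logGenTerm z (k, m)‖
      = ‖Complex.exp (-z)‖ ^ ((m + 1) ^ 2 * (k + 1)) / ((k + 1 : ℕ) : ℝ) := by
        rw [logGenTerm_eq_pow_div, norm_div, norm_pow, norm_pow, ← pow_mul, Complex.norm_natCast]
    _ ≤ ‖Complex.exp (-z)‖ ^ ((m + 1) ^ 2 * (k + 1)) :=
        div_le_self (by positivity) (mod_cast k.succ_pos)
    _ ≤ ‖Complex.exp (-z)‖ ^ (k + m) := pow_le_pow_of_le_one (norm_nonneg _) hq.le hexponent
    _ = ‖Complex.exp (-z)‖ ^ k * ‖Complex.exp (-z)‖ ^ m := pow_add _ _ _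

theorem hasSum_logGenTerm {z : ℂ} (hz : 0 < z.re) : HasSum (logGenTerm z) (logGenFun z) := by
  have hsummable := (summable_norm_logGenTerm hz).of_norm
  rw [hsummable.hasSum_iff, hsummable.tsum_prod, logGenFun]
  simp only [logGenTerm, tsum_div_const, squareTheta]

theorem hasSum_pow_succ_div {q : ℂ} (hq : ‖q‖ < 1) :
    HasSum (fun k : ℕ ↦ q ^ (k + 1) / (k + 1)) (-Complex.log (1 - q)) := by
  simpa using (hasSum_nat_add_iff' 1).mpr (Complex.hasSum_taylorSeries_neg_log hq)

theorem hasSum_neg_log_one_sub_exp {z : ℂ} (hz : 0 < z.re) :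
    HasSum (fun m : ℕ ↦ -Complex.log (1 - Complex.exp (-z) ^ (m + 1) ^ 2)) (logGenFun z) := by
  refine ((Equiv.prodComm ℕ ℕ).hasSum_iff.mpr (hasSum_logGenTerm hz)).prod_fiberwise fun m ↦ ?_
  have hlt : ‖Complex.exp (-z) ^ (m + 1) ^ 2‖ < 1 := by
    rw [norm_pow]
    exact pow_lt_one₀ (norm_nonneg _) (norm_exp_neg_lt_one hz) (by positivity)
  simpa [Function.comp_def, logGenTerm_eq_pow_div] using hasSum_pow_succ_div hlt

theorem hasProd_inv_one_sub_exp {z : ℂ} (hz : 0 < z.re) :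
    HasProd (fun m : ℕ ↦ (1 - Complex.exp (-z) ^ (m + 1) ^ 2)⁻¹) (Complex.exp (logGenFun z)) := by
  refine (hasSum_neg_log_one_sub_exp hz).cexp.congr_fun fun m ↦ ?_
  have hlt : ‖Complex.exp (-z) ^ (m + 1) ^ 2‖ < 1 := by
    rw [norm_pow]
    exact pow_lt_one₀ (norm_nonneg _) (norm_exp_neg_lt_one hz) (by positivity)
  rw [Function.comp_apply, Complex.exp_neg (Complex.log _), Complex.exp_log]
  exact sub_ne_zero.mpr fun h ↦ by simp [← h] at hlt

open Classical in
theorem pSq_eq_card_restricted (n : ℕ) :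
    pSq n = (Nat.Partition.restricted n fun i ↦ ∃ m : ℕ, 1 ≤ m ∧ i = m ^ 2).card := by
  rw [pSq, Nat.card_eq_fintype_card, Fintype.card_subtype, Nat.Partition.restricted]

theorem summable_pSq_mul_exp {t : ℝ} (ht : 0 < t) :
    Summable fun n : ℕ ↦ (pSq n : ℝ) * Real.exp (-t) ^ n := by
  classical
  simp only [pSq_eq_card_restricted]
  exact summable_card_restricted_mul_pow _ (Real.exp_pos _).le (by simpa using ht)

theorem hasSum_pSq_mul_exp {z : ℂ} (hz : 0 < z.re) :
    HasSum (fun n : ℕ ↦ (pSq n : ℂ) * Complex.exp (-z) ^ n) (Complex.exp (logGenFun z)) := by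
  classical
  have hsucc (m : ℕ) : (m + 1) ^ 2 - 1 + 1 = (m + 1) ^ 2 :=
    Nat.sub_add_cancel (Nat.one_le_pow _ _ m.succ_pos)
  have hinj : Function.Injective fun m : ℕ ↦ (m + 1) ^ 2 - 1 := fun a b h ↦ by
    have hsq : (a + 1) ^ 2 = (b + 1) ^ 2 := by
      rw [← hsucc a, ← hsucc b]
      exact congrArg (· + 1) h
    exact Nat.succ_injective (Nat.pow_left_injective two_ne_zero hsq)
  have hprod : HasProd (fun i : ℕ ↦ if ∃ m : ℕ, 1 ≤ m ∧ i + 1 = m ^ 2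
      then (1 - Complex.exp (-z) ^ (i + 1))⁻¹ else 1) (Complex.exp (logGenFun z)) := by
    rw [← hinj.hasProd_iff]
    · refine (hasProd_inv_one_sub_exp hz).congr_fun fun m ↦ ?_
      simp only [Function.comp_apply, hsucc]
      rw [if_pos ⟨m + 1, m.succ_pos, rfl⟩]
    · refine fun i hi ↦ if_neg ?_
      rintro ⟨m, hm, h⟩
      exact hi ⟨m - 1, by simp only [Nat.sub_add_cancel hm]; omega⟩
  simp only [pSq_eq_card_restricted]
  rw [← hprod.tprod_eq]
  exact hasSum_card_restricted_mul_pow _ (norm_exp_neg_lt_one hz)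

end LogGeneratingFunction

section CauchyFormula

open MeasureTheory
open Complex (I)

theorem integral_exp_intCast_mul_I {j : ℤ} (hj : j ≠ 0) :
    ∫ θ in (-π)..π, Complex.exp (j * I * (θ : ℂ)) = 0 := by
  have hperiod : (j : ℂ) * I * (π : ℝ) = j * I * ((-π : ℝ) : ℂ) + j * (2 * π * I) := by
    push_cast
    ring
  rw [integral_exp_mul_complex (mul_ne_zero (mod_cast hj) Complex.I_ne_zero), hperiod,
    Complex.exp_add, Complex.exp_int_mul_two_pi_mul_I, mul_one, sub_self, zero_div]

theorem integral_exp_neg_pow_mul_exp (t : ℝ) (k n : ℕ) :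
    ∫ θ in (-π)..π, Complex.exp (-(t + θ * I)) ^ k * Complex.exp (n * (t + θ * I)) =
      if k = n then 2 * (π : ℂ) else 0 := by
  have hcombine (θ : ℝ) : Complex.exp (-(t + θ * I)) ^ k * Complex.exp (n * (t + θ * I)) =
      Complex.exp (((n - k : ℤ) : ℂ) * t) * Complex.exp ((n - k : ℤ) * I * (θ : ℂ)) := by
    rw [← exp_neg_natCast_mul, ← Complex.exp_add, ← Complex.exp_add]
    congr 1
    push_cast
    ring
  simp only [hcombine, intervalIntegral.integral_const_mul]
  split_ifs with hkn
  · simp [hkn, two_mul]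
  · rw [integral_exp_intCast_mul_I (by omega), mul_zero]

theorem mul_two_pi_eq_integral_of_hasSum {a : ℕ → ℂ} {f : ℝ → ℂ} {t : ℝ}
    (ha : Summable fun k ↦ ‖a k‖ * Real.exp (-t) ^ k)
    (hf : ∀ θ : ℝ, HasSum (fun k ↦ a k * Complex.exp (-(t + θ * I)) ^ k) (f θ)) (n : ℕ) :
    a n * (2 * π) = ∫ θ in (-π)..π, f θ * Complex.exp (n * (t + θ * I)) := by
  have hintegrals := intervalIntegral.hasSum_integral_of_dominated_convergence (μ := volume)
    (a := -π) (b := π)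
    (F := fun k (θ : ℝ) ↦
      a k * Complex.exp (-(t + θ * I)) ^ k * Complex.exp (n * (t + θ * I)))
    (bound := fun k _ ↦ ‖a k‖ * Real.exp (-t) ^ k * Real.exp (n * t))
    (fun k ↦ Continuous.aestronglyMeasurable (by fun_prop))
    (fun k ↦ .of_forall fun θ _ ↦ by
      simp [Complex.norm_exp])
    (.of_forall fun θ _ ↦ ha.mul_right _) (by simp)
    (.of_forall fun θ _ ↦ (hf θ).mul_right _)
  simp only [mul_assoc, intervalIntegral.integral_const_mul, integral_exp_neg_pow_mul_exp,
    mul_ite, mul_zero] at hintegrals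
  exact (hasSum_ite_eq n _).congr_fun (by grind) |>.unique hintegrals

theorem pSq_mul_two_pi_eq_integral {t : ℝ} (ht : 0 < t) (n : ℕ) :
    (pSq n : ℂ) * (2 * π) = ∫ θ in (-π)..π,
      Complex.exp (logGenFun (t + θ * I)) * Complex.exp (n * (t + θ * I)) :=
  mul_two_pi_eq_integral_of_hasSum (a := fun n ↦ (pSq n : ℂ))
    (by simpa using summable_pSq_mul_exp ht)
    (fun θ ↦ hasSum_pSq_mul_exp (by simpa using ht)) n

end CauchyFormula

section MinorArcs

open Finset
open Complex (I)

/-- The sum of `1 - cos (m² θ)` over `1 ≤ m ≤ N`. It measures how much the modulus of the generating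
function drops when the argument of `q` moves from `0` to `θ`. -/
noncomputable def squareOscillation (N : ℕ) (θ : ℝ) : ℝ :=
  ∑ m ∈ range N, (1 - Real.cos ((m + 1 : ℝ) ^ 2 * θ))

theorem one_sub_cos_nonneg (x : ℝ) : 0 ≤ 1 - Real.cos x :=
  sub_nonneg.mpr (Real.cos_le_one x)

theorem squareOscillation_nonneg (N : ℕ) (θ : ℝ) : 0 ≤ squareOscillation N θ :=
  sum_nonneg fun _ _ ↦ one_sub_cos_nonneg _

theorem squareOscillation_mono {M N : ℕ} (h : M ≤ N) (θ : ℝ) :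
    squareOscillation M θ ≤ squareOscillation N θ :=
  sum_le_sum_of_subset_of_nonneg (range_mono h) fun _ _ _ ↦ one_sub_cos_nonneg _

theorem squareOscillation_abs (N : ℕ) (θ : ℝ) :
    squareOscillation N |θ| = squareOscillation N θ := by
  refine sum_congr rfl fun m _ ↦ ?_
  rw [← Real.cos_abs ((m + 1 : ℝ) ^ 2 * θ), abs_mul, abs_of_nonneg (sq_nonneg (m + 1 : ℝ))]

theorem logGenTerm_re (t θ : ℝ) (k m : ℕ) : (logGenTerm (t + θ * I) (k, m)).re =
    Real.exp (-((m + 1 : ℝ) ^ 2 * ((k + 1 : ℝ) * t))) / (k + 1 : ℝ) *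
      Real.cos ((m + 1 : ℝ) ^ 2 * ((k + 1 : ℝ) * θ)) := by
  have hpolar : logGenTerm (t + θ * I) (k, m) =
      ((Real.exp (-((m + 1 : ℝ) ^ 2 * ((k + 1 : ℝ) * t))) / (k + 1 : ℝ) : ℝ) : ℂ) *
        Complex.exp ((-((m + 1 : ℝ) ^ 2 * ((k + 1 : ℝ) * θ)) : ℝ) * I) := by
    rw [logGenTerm, Complex.ofReal_div, Complex.ofReal_exp, div_mul_eq_mul_div, ← Complex.exp_add]
    push_cast
    congr 2
    ring
  rw [hpolar, Complex.re_ofReal_mul, Complex.exp_ofReal_mul_I_re, Real.cos_neg]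

theorem logGenTerm_re_sub_logGenTerm_re (t θ : ℝ) (k m : ℕ) :
    (logGenTerm t (k, m)).re - (logGenTerm (t + θ * I) (k, m)).re =
      Real.exp (-((m + 1 : ℝ) ^ 2 * ((k + 1 : ℝ) * t))) / (k + 1 : ℝ) *
        (1 - Real.cos ((m + 1 : ℝ) ^ 2 * ((k + 1 : ℝ) * θ))) := by
  have hreal := logGenTerm_re t 0 k m
  simp only [Complex.ofReal_zero, zero_mul, add_zero, mul_zero, Real.cos_zero, mul_one] at hreal
  rw [hreal, logGenTerm_re, mul_one_sub]

theorem squareOscillation_div_three_le {t θ : ℝ} (ht : 0 < t) {N : ℕ} (hN : (N : ℝ) ^ 2 * t ≤ 1) :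
    squareOscillation N θ / 3 ≤ (logGenFun t).re - (logGenFun (t + θ * I)).re := by
  have hsum := (Complex.hasSum_re (hasSum_logGenTerm (z := t) (by simpa using ht))).sub
    (Complex.hasSum_re (hasSum_logGenTerm (z := t + θ * I) (by simpa using ht)))
  have hpartial := sum_le_hasSum (({0} : Finset ℕ) ×ˢ range N) (fun ⟨k, m⟩ _ ↦ by
    rw [logGenTerm_re_sub_logGenTerm_re]
    exact mul_nonneg (by positivity) (one_sub_cos_nonneg _)) hsum
  rw [sum_product, sum_singleton] at hpartial
  refine le_trans ?_ hpartial
  rw [squareOscillation, sum_div]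
  refine sum_le_sum fun m hm ↦ ?_
  have hmN : (m + 1 : ℝ) ≤ N := mod_cast mem_range.mp hm
  have hmt : (m + 1 : ℝ) ^ 2 * t ≤ 1 := hN.trans' (by gcongr)
  have hexp : (1 / 3 : ℝ) ≤ Real.exp (-((m + 1 : ℝ) ^ 2 * t)) := calc
    (1 / 3 : ℝ) ≤ Real.exp (-1) := by linarith [Real.exp_neg_one_gt_d9]
    _ ≤ Real.exp (-((m + 1 : ℝ) ^ 2 * t)) := Real.exp_le_exp.mpr (neg_le_neg hmt)
  rw [logGenTerm_re_sub_logGenTerm_re, Nat.cast_zero, zero_add, one_mul, one_mul, div_one,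
    div_eq_mul_one_div, mul_comm]
  exact mul_le_mul_of_nonneg_right hexp (one_sub_cos_nonneg _)

theorem pow_five_div_five_le_sum_pow_four (N : ℕ) :
    (N : ℝ) ^ 5 / 5 ≤ ∑ m ∈ range N, (m + 1 : ℝ) ^ 4 := by
  induction N with
  | zero => simp
  | succ N ih =>
    have hdiff : ((N : ℝ) + 1) ^ 5 / 5 + (2 * N ^ 3 + 4 * N ^ 2 + 3 * N + 4 / 5) =
        (N : ℝ) ^ 5 / 5 + (N + 1) ^ 4 := by ring
    have hpos : (0 : ℝ) ≤ 2 * N ^ 3 + 4 * N ^ 2 + 3 * N + 4 / 5 := by positivity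
    rw [sum_range_succ]
    push_cast
    linarith [hdiff]

theorem sq_div_five_le_one_sub_cos {x : ℝ} (hx : |x| ≤ π) : x ^ 2 / 5 ≤ 1 - Real.cos x := by
  have hpi : (1 / 5 : ℝ) ≤ 2 / π ^ 2 := by
    rw [div_le_div_iff₀ (by norm_num) (by positivity)]
    nlinarith [Real.pi_lt_d2, Real.pi_pos]
  nlinarith [Real.cos_le_one_sub_mul_cos_sq hx, sq_nonneg x]

theorem sq_mul_pow_five_div_le_squareOscillation {y θ : ℝ} (hy : 1 ≤ y) (h : |θ| * y ^ 2 ≤ 1) :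
    θ ^ 2 * y ^ 5 / 800 ≤ squareOscillation ⌊y⌋₊ θ := by
  have hfloor : (⌊y⌋₊ : ℝ) ≤ y := Nat.floor_le (by linarith)
  have hterm : ∀ m ∈ range ⌊y⌋₊,
      θ ^ 2 / 5 * (m + 1 : ℝ) ^ 4 ≤ 1 - Real.cos ((m + 1 : ℝ) ^ 2 * θ) := by
    intro m hm
    have hmy : (m + 1 : ℝ) ≤ y := hfloor.trans' (mod_cast mem_range.mp hm)
    have hle : |(m + 1 : ℝ) ^ 2 * θ| ≤ π := by
      rw [abs_mul, abs_of_nonneg (sq_nonneg (m + 1 : ℝ))]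
      calc (m + 1 : ℝ) ^ 2 * |θ| ≤ y ^ 2 * |θ| := by gcongr
        _ ≤ π := by linarith [Real.pi_gt_three]
    exact (sq_div_five_le_one_sub_cos hle).trans' (by ring_nf; rfl)
  calc θ ^ 2 * y ^ 5 / 800 = θ ^ 2 / 5 * ((y / 2) ^ 5 / 5) := by ring
    _ ≤ θ ^ 2 / 5 * ((⌊y⌋₊ : ℝ) ^ 5 / 5) := by
      gcongr
      exact (Nat.div_two_lt_floor hy).le
    _ ≤ θ ^ 2 / 5 * ∑ m ∈ range ⌊y⌋₊, (m + 1 : ℝ) ^ 4 := by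
      gcongr
      exact pow_five_div_five_le_sum_pow_four _
    _ ≤ squareOscillation ⌊y⌋₊ θ := by
      rw [mul_sum]
      exact sum_le_sum hterm

theorem div_le_squareOscillation_of_abs_mul_sq_le {N : ℕ} {θ x : ℝ} (hx : 1 ≤ x)
    (h₁ : |θ| * x ^ 2 ≤ 1) (h₂ : 1 < |θ| * (N + 1 : ℝ) ^ 2) :
    x / 800 ≤ squareOscillation N θ := by
  have hθ : 0 < |θ| := pos_of_mul_pos_left (one_pos.trans h₂) (by positivity)
  set y := (√|θ|)⁻¹ with hy
  have hy₀ : 0 < y := by positivity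
  have hθy : |θ| * y ^ 2 = 1 := by
    rw [hy, inv_pow, Real.sq_sqrt hθ.le, mul_inv_cancel₀ hθ.ne']
  have hxy : x ≤ y := by
    refine le_of_sq_le_sq ?_ hy₀.le
    exact le_of_mul_le_mul_left (h₁.trans hθy.ge) hθ
  have hyN : y < N + 1 := by
    refine lt_of_pow_lt_pow_left₀ 2 (by positivity) ?_
    exact lt_of_mul_lt_mul_left (hθy.trans_lt h₂) hθ.le
  have hfloor : ⌊y⌋₊ ≤ N := Nat.lt_succ_iff.mp <| (Nat.floor_lt hy₀.le).mpr (mod_cast hyN)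
  calc x / 800 ≤ y / 800 := by gcongr
    _ = (|θ| * y ^ 2) ^ 2 * y / 800 := by rw [hθy, one_pow, one_mul]
    _ = θ ^ 2 * y ^ 5 / 800 := by rw [mul_pow, sq_abs]; ring
    _ ≤ squareOscillation ⌊y⌋₊ θ :=
      sq_mul_pow_five_div_le_squareOscillation (hx.trans hxy) hθy.le
    _ ≤ squareOscillation N θ := squareOscillation_mono hfloor θ

theorem one_sub_cos_eq_two_mul_sin_half_sq (x : ℝ) :
    1 - Real.cos x = 2 * Real.sin (x / 2) ^ 2 := by
  rw [Real.sin_sq_eq_half_sub, mul_div_cancel₀ x two_ne_zero]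
  ring

theorem abs_sin_add_le (x y : ℝ) : |Real.sin (x + y)| ≤ |Real.sin x| + |Real.sin y| := by
  rw [Real.sin_add]
  refine (abs_add_le _ _).trans (add_le_add ?_ ?_) <;> rw [abs_mul]
  · exact mul_le_of_le_one_right (abs_nonneg _) (Real.abs_cos_le_one y)
  · exact mul_le_of_le_one_left (abs_nonneg _) (Real.abs_cos_le_one x)

theorem one_sub_cos_sub_two_mul_add_le (a b c : ℝ) : 1 - Real.cos (a - 2 * b + c) ≤
    4 * ((1 - Real.cos a) + 2 * (1 - Real.cos b) + (1 - Real.cos c)) := by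
  simp only [one_sub_cos_eq_two_mul_sin_half_sq]
  have hsin : |Real.sin ((a - 2 * b + c) / 2)| ≤
      |Real.sin (a / 2)| + 2 * |Real.sin (b / 2)| + |Real.sin (c / 2)| := by
    have hb : |Real.sin (-(b / 2) + -(b / 2))| ≤ 2 * |Real.sin (b / 2)| := by
      simpa [two_mul] using abs_sin_add_le (-(b / 2)) (-(b / 2))
    rw [show (a - 2 * b + c) / 2 = (a / 2 + c / 2) + (-(b / 2) + -(b / 2)) by ring]
    linarith [abs_sin_add_le (a / 2 + c / 2) (-(b / 2) + -(b / 2)), abs_sin_add_le (a / 2) (c / 2)]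
  have hsq := pow_le_pow_left₀ (abs_nonneg _) hsin 2
  rw [sq_abs] at hsq
  nlinarith [sq_abs (Real.sin (a / 2)), sq_abs (Real.sin (b / 2)), sq_abs (Real.sin (c / 2)),
    sq_nonneg (|Real.sin (a / 2)| - |Real.sin (b / 2)|),
    sq_nonneg (|Real.sin (b / 2)| - |Real.sin (c / 2)|),
    sq_nonneg (|Real.sin (a / 2)| - |Real.sin (c / 2)|)]

theorem sum_one_sub_cos_add_le_squareOscillation (N k : ℕ) (θ : ℝ) :
    ∑ m ∈ range N, (1 - Real.cos (((m + k : ℕ) + 1 : ℝ) ^ 2 * θ)) ≤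
      squareOscillation (N + k) θ := by
  rw [squareOscillation, add_comm N, sum_range_add]
  simp only [add_comm k]
  exact le_add_of_nonneg_left (sum_nonneg fun _ _ ↦ one_sub_cos_nonneg _)

-- The second difference of `m ^ 2 * θ` is the constant `2 * θ`.
theorem mul_sin_sq_le_squareOscillation (N : ℕ) (θ : ℝ) :
    (N : ℝ) * Real.sin θ ^ 2 ≤ 8 * squareOscillation (N + 2) θ := by
  have hterm : ∀ m ∈ range N, 2 * Real.sin θ ^ 2 ≤
      4 * ((1 - Real.cos (((m + 0 : ℕ) + 1 : ℝ) ^ 2 * θ)) +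
        2 * (1 - Real.cos (((m + 1 : ℕ) + 1 : ℝ) ^ 2 * θ)) +
        (1 - Real.cos (((m + 2 : ℕ) + 1 : ℝ) ^ 2 * θ))) := by
    intro m _
    refine (one_sub_cos_sub_two_mul_add_le _ _ _).trans' (le_of_eq ?_)
    rw [Real.sin_sq_eq_half_sub]
    push_cast
    ring_nf
  have hsum := sum_le_sum hterm
  simp only [← mul_sum, sum_add_distrib, sum_const, card_range, nsmul_eq_mul] at hsum
  linarith [sum_one_sub_cos_add_le_squareOscillation N 0 θ,
    sum_one_sub_cos_add_le_squareOscillation N 1 θ,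
    sum_one_sub_cos_add_le_squareOscillation N 2 θ,
    squareOscillation_mono (show N + 0 ≤ N + 2 by omega) θ,
    squareOscillation_mono (show N + 1 ≤ N + 2 by omega) θ]

theorem cos_odd_sq_mul (k : ℕ) (θ : ℝ) :
    Real.cos ((2 * k + 1 : ℝ) ^ 2 * θ) = -Real.cos ((2 * k + 1 : ℝ) ^ 2 * (π - θ)) := by
  have hperiod : (2 * k + 1 : ℝ) ^ 2 * θ =
      (π - (2 * k + 1 : ℝ) ^ 2 * (π - θ)) + ((2 * k ^ 2 + 2 * k : ℕ) : ℝ) * (2 * π) := by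
    push_cast
    ring
  rw [hperiod, Real.cos_add_nat_mul_two_pi, Real.cos_pi_sub]

-- Only the odd squares are used: they are `1` modulo `8`, so `m ^ 2 * θ` stays near `π` mod `2π`.
theorem div_four_le_squareOscillation_of_sub_mul_sq_le {N : ℕ} {θ x : ℝ} (hx : 1 ≤ x)
    (hxN : x ≤ N) (hθ : θ ≤ π) (h : (π - θ) * x ^ 2 ≤ 1) : x / 4 ≤ squareOscillation N θ := by
  have hfloor : (⌊x⌋₊ : ℝ) ≤ x := Nat.floor_le (by linarith)
  set K := (⌊x⌋₊ + 1) / 2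
  have hterm : ∀ k ∈ range K, (1 : ℝ) ≤ 1 - Real.cos (((2 * k : ℕ) + 1 : ℝ) ^ 2 * θ) := by
    intro k hk
    have hkx : (2 * k + 1 : ℝ) ≤ x :=
      hfloor.trans' (mod_cast (by have := mem_range.mp hk; omega : 2 * k + 1 ≤ ⌊x⌋₊))
    have hsmall : (2 * k + 1 : ℝ) ^ 2 * (π - θ) ≤ 1 := calc
      (2 * k + 1 : ℝ) ^ 2 * (π - θ) ≤ x ^ 2 * (π - θ) := by
        have := sub_nonneg.mpr hθ
        gcongr
      _ ≤ 1 := by rwa [mul_comm]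
    have hnonneg : 0 ≤ (2 * k + 1 : ℝ) ^ 2 * (π - θ) :=
      mul_nonneg (sq_nonneg _) (sub_nonneg.mpr hθ)
    have hcos : 0 ≤ Real.cos ((2 * k + 1 : ℝ) ^ 2 * (π - θ)) :=
      Real.cos_nonneg_of_neg_pi_div_two_le_of_le (by linarith [Real.pi_pos])
        (by linarith [Real.pi_gt_three])
    push_cast
    rw [cos_odd_sq_mul]
    linarith
  have hsub : (range K).image (fun k ↦ 2 * k) ⊆ range N := by
    have hfN : ⌊x⌋₊ ≤ N := mod_cast hfloor.trans hxN
    grind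
  have hKx : (⌊x⌋₊ : ℝ) ≤ 2 * K := mod_cast (by omega : ⌊x⌋₊ ≤ 2 * K)
  calc x / 4 ≤ K := by linarith [Nat.div_two_lt_floor hx]
    _ = ∑ _k ∈ range K, (1 : ℝ) := by simp
    _ ≤ ∑ k ∈ range K, (1 - Real.cos (((2 * k : ℕ) + 1 : ℝ) ^ 2 * θ)) := sum_le_sum hterm
    _ = ∑ m ∈ (range K).image (fun k ↦ 2 * k), (1 - Real.cos (((m : ℕ) + 1 : ℝ) ^ 2 * θ)) :=
      by rw [sum_image fun _ _ _ _ h ↦ by simpa using h]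
    _ ≤ squareOscillation N θ :=
      sum_le_sum_of_subset_of_nonneg hsub fun _ _ _ ↦ one_sub_cos_nonneg _

theorem le_two_mul_sin {x : ℝ} (h₀ : 0 ≤ x) (h₁ : x ≤ π / 2) : x ≤ 2 * Real.sin x := by
  have hpi : (1 / 2 : ℝ) ≤ 2 / π := by
    rw [div_le_div_iff₀ two_pos Real.pi_pos]
    linarith [Real.pi_le_four]
  nlinarith [Real.mul_le_sin h₀ h₁]

theorem div_le_squareOscillation_of_nonneg {N : ℕ} {θ x : ℝ} (hN : 3 ≤ N) (hx : 1 ≤ x)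
    (hxN : x ^ 5 = N) (hθ₀ : 0 ≤ θ) (hθ : θ ≤ π) (h : 1 < θ * (N + 1 : ℝ) ^ 2) :
    x / 800 ≤ squareOscillation N θ := by
  by_cases hsin : 1 ≤ 2 * x ^ 2 * Real.sin θ
  · have hN' : (N : ℝ) / 3 ≤ (N - 2 : ℕ) := by
      have : (3 : ℝ) ≤ N := mod_cast hN
      rw [Nat.cast_sub (by omega)]
      push_cast
      linarith
    have hdiff := mul_sin_sq_le_squareOscillation (N - 2) θ
    rw [Nat.sub_add_cancel (by omega)] at hdiff
    have hchain : x / 12 ≤ 8 * squareOscillation N θ := calc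
      x / 12 ≤ x / 12 * (2 * x ^ 2 * Real.sin θ) ^ 2 :=
        le_mul_of_one_le_right (by positivity) (one_le_pow₀ hsin)
      _ = N / 3 * Real.sin θ ^ 2 := by rw [← hxN]; ring
      _ ≤ (N - 2 : ℕ) * Real.sin θ ^ 2 := by gcongr
      _ ≤ 8 * squareOscillation N θ := hdiff
    linarith
  · have hx₂ : 0 < x ^ 2 := by positivity
    rcases le_total θ (π / 2) with hhalf | hhalf
    · have hnear := le_two_mul_sin hθ₀ hhalf
      refine div_le_squareOscillation_of_abs_mul_sq_le hx ?_ ?_ <;> rw [abs_of_nonneg hθ₀]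
      · nlinarith [hx₂]
      · exact h
    · have hnear := le_two_mul_sin (sub_nonneg.mpr hθ) (by linarith : π - θ ≤ π / 2)
      rw [Real.sin_pi_sub] at hnear
      have hxN' : x ≤ N := hxN ▸ le_self_pow₀ hx (by norm_num)
      linarith [div_four_le_squareOscillation_of_sub_mul_sq_le hx hxN' hθ (by nlinarith [hx₂])]

theorem div_le_squareOscillation {N : ℕ} {θ x : ℝ} (hN : 3 ≤ N) (hx : 1 ≤ x) (hxN : x ^ 5 = N)
    (hθ : |θ| ≤ π) (h : 1 < |θ| * (N + 1 : ℝ) ^ 2) : x / 800 ≤ squareOscillation N θ := by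
  rw [← squareOscillation_abs]
  exact div_le_squareOscillation_of_nonneg hN hx hxN (abs_nonneg θ) hθ h

theorem pow_le_factorial_mul_exp_div {x a : ℝ} (hx : 0 ≤ x) (ha : 0 < a) (n : ℕ) :
    x ^ n ≤ a ^ n * n.factorial * Real.exp (x / a) := by
  have h := Real.pow_div_factorial_le_exp (x / a) (by positivity) n
  rw [div_le_iff₀ (by positivity), div_pow, div_le_iff₀ (by positivity)] at h
  linarith

-- Off the major arc the oscillation is at least a multiple of `y ^ (1 / 5)`, and its exponential
-- beats the polynomial weight `θ ^ 2 * y ^ 5`.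
theorem sq_mul_pow_five_le_mul_exp_squareOscillation {y θ : ℝ} (hy : 4 ≤ y) (hθ : |θ| ≤ π)
    (hminor : 1 < |θ| * y ^ 2) :
    θ ^ 2 * y ^ 5 ≤ 320 * (2400 ^ 25 * (Nat.factorial 25 : ℝ)) *
      Real.exp (squareOscillation ⌊y⌋₊ θ / 3) := by
  set N := ⌊y⌋₊
  have hyN : y / 2 ≤ N := (Nat.div_two_lt_floor (by linarith)).le
  have hN₃ : 3 ≤ N := Nat.le_floor (by push_cast; linarith)
  set x := (N : ℝ) ^ (1 / 5 : ℝ)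
  have hx₅ : x ^ 5 = N := by
    rw [← Real.rpow_natCast, ← Real.rpow_mul (by positivity)]
    norm_num
  have hx₁ : 1 ≤ x := Real.one_le_rpow (mod_cast (by omega : 1 ≤ N)) (by norm_num)
  have hminorN : 1 < |θ| * (N + 1 : ℝ) ^ 2 := hminor.trans_le <| by
    gcongr
    exact (Nat.lt_floor_add_one y).le
  have hosc := div_le_squareOscillation hN₃ hx₁ hx₅ hθ hminorN
  have hθ₂ : θ ^ 2 ≤ 10 := by
    rw [← sq_abs]
    nlinarith [Real.pi_lt_d2, Real.pi_pos, abs_nonneg θ]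
  calc θ ^ 2 * y ^ 5 ≤ 10 * (2 * N) ^ 5 := by
        gcongr
        linarith
    _ = 320 * x ^ 25 := by rw [← hx₅]; ring
    _ ≤ 320 * (2400 ^ 25 * (Nat.factorial 25 : ℝ) * Real.exp (x / 2400)) := by
        gcongr
        exact pow_le_factorial_mul_exp_div (by positivity) (by norm_num) 25
    _ ≤ 320 * (2400 ^ 25 * (Nat.factorial 25 : ℝ) * Real.exp (squareOscillation N θ / 3)) := by
        have hexp : x / 2400 ≤ squareOscillation N θ / 3 := by linarith
        gcongr
    _ = _ := (mul_assoc _ _ _).symm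

theorem exists_one_add_sq_mul_pow_five_le_mul_exp_squareOscillation :
    ∃ K : ℝ, ∀ y θ : ℝ, 4 ≤ y → |θ| ≤ π →
      1 + θ ^ 2 * y ^ 5 ≤ K * Real.exp (squareOscillation ⌊y⌋₊ θ / 3) := by
  set B : ℝ := 320 * (2400 ^ 25 * (Nat.factorial 25 : ℝ))
  have : 0 < B := by positivity
  refine ⟨2400 + (1 + B), fun y θ hy hθ ↦ ?_⟩
  have hE₁ : 1 ≤ Real.exp (squareOscillation ⌊y⌋₊ θ / 3) :=
    Real.one_le_exp (div_nonneg (squareOscillation_nonneg _ θ) (by norm_num))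
  rcases le_or_gt (|θ| * y ^ 2) 1 with hmajor | hminor
  · have hosc := sq_mul_pow_five_div_le_squareOscillation (by linarith) hmajor
    have hexp := Real.add_one_le_exp (squareOscillation ⌊y⌋₊ θ / 3)
    nlinarith
  · linarith [sq_mul_pow_five_le_mul_exp_squareOscillation hy hθ hminor]

theorem exists_exp_logGenFun_re_sub_mul_le : ∃ K : ℝ, ∀ τ θ : ℝ, 0 < τ → τ ≤ 1 / 2 → |θ| ≤ π →
    Real.exp ((logGenFun ((τ ^ 4 : ℝ) + θ * I)).re - (logGenFun (τ ^ 4 : ℝ)).re) *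
      (1 + (θ / τ ^ 5) ^ 2) ≤ K := by
  obtain ⟨K, hK⟩ := exists_one_add_sq_mul_pow_five_le_mul_exp_squareOscillation
  refine ⟨K, fun τ θ hτ hτ₂ hθ ↦ ?_⟩
  set y := 1 / τ ^ 2 with hy
  have hy₄ : 4 ≤ y := by
    rw [hy, le_div_iff₀ (by positivity)]
    nlinarith
  have hyτ : y ^ 2 * τ ^ 4 = 1 := by
    rw [hy]
    field_simp
  have hweight : (θ / τ ^ 5) ^ 2 = θ ^ 2 * y ^ 5 := by
    rw [hy]
    field_simp
  have hfloor : (⌊y⌋₊ : ℝ) ^ 2 * τ ^ 4 ≤ 1 := hyτ ▸ by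
    gcongr
    exact Nat.floor_le (by linarith)
  have hdecay := squareOscillation_div_three_le (θ := θ) (pow_pos hτ 4) hfloor
  set S := squareOscillation ⌊y⌋₊ θ
  rw [hweight]
  calc Real.exp ((logGenFun ((τ ^ 4 : ℝ) + θ * I)).re - (logGenFun (τ ^ 4 : ℝ)).re) *
        (1 + θ ^ 2 * y ^ 5)
      ≤ Real.exp (-(S / 3)) * (K * Real.exp (S / 3)) := by
        gcongr
        · linarith
        · exact hK y θ hy₄ hθ
    _ = K := by rw [mul_left_comm, ← Real.exp_add, neg_add_cancel, Real.exp_zero, mul_one]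

end MinorArcs

section ThetaRemainder

open MeasureTheory

theorem ofReal_mul_cpow {r : ℝ} (hr : 0 < r) {x : ℂ} (hx : x ≠ 0) (s : ℂ) :
    ((r : ℂ) * x) ^ s = (r : ℂ) ^ s * x ^ s := by
  have hr' : (r : ℂ) ≠ 0 := mod_cast hr.ne'
  rw [Complex.cpow_def_of_ne_zero (mul_ne_zero hr' hx), Complex.cpow_def_of_ne_zero hr',
    Complex.cpow_def_of_ne_zero hx, ← Complex.exp_add, Complex.log_ofReal_mul hr hx,
    Complex.ofReal_log hr.le, add_mul]

theorem norm_cpow_neg_half_le {u : ℂ} (hu : 0 < u.re) :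
    ‖u ^ (-(1 / 2) : ℂ)‖ ≤ u.re ^ (-(1 / 2) : ℝ) := by
  have hcast : (-(1 / 2) : ℂ) = ((-(1 / 2) : ℝ) : ℂ) := by push_cast; rfl
  rw [hcast, Complex.norm_cpow_real]
  exact Real.rpow_le_rpow_of_nonpos hu (Complex.re_le_norm u) (by norm_num)

theorem exp_neg_div_one_sub_exp_neg (x : ℝ) :
    Real.exp (-x) / (1 - Real.exp (-x)) = (Real.exp x - 1)⁻¹ := by
  rw [Real.exp_neg]
  field_simp

theorem inv_exp_sub_one_le_inv {x : ℝ} (hx : 0 < x) : (Real.exp x - 1)⁻¹ ≤ x⁻¹ := by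
  gcongr
  linarith [Real.add_one_le_exp x]

theorem inv_exp_sub_one_le_two_div_sq {x : ℝ} (hx : 0 < x) :
    (Real.exp x - 1)⁻¹ ≤ 2 / x ^ 2 := by
  rw [← inv_div]
  gcongr
  linarith [Real.quadratic_le_exp_of_nonneg hx.le]

theorem re_ofReal_div (r : ℝ) (u : ℂ) : ((r : ℂ) / u).re = r * u.re / Complex.normSq u := by
  rw [div_eq_mul_inv, Complex.re_ofReal_mul, Complex.inv_re, mul_div_assoc]

theorem re_pi_sq_div_pos {u : ℂ} (hu : 0 < u.re) : 0 < ((π : ℂ) ^ 2 / u).re := by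
  have hnormSq : 0 < Complex.normSq u :=
    Complex.normSq_pos.mpr fun h ↦ by simp [h] at hu
  rw [← Complex.ofReal_pow, re_ofReal_div]
  positivity

theorem squareTheta_pi_mul {a : ℂ} (ha : 0 < a.re) :
    squareTheta (π * a) = (jacobiTheta (Complex.I * a) - 1) / 2 := by
  have him : 0 < (Complex.I * a).im := by simpa using ha
  rw [← (hasSum_nat_jacobiTheta him).tsum_eq, squareTheta]
  refine tsum_congr fun m ↦ congrArg Complex.exp ?_
  linear_combination (-π * (m + 1 : ℂ) ^ 2 * a) * Complex.I_sq

theorem squareTheta_eq_jacobiTheta {u : ℂ} (hu : 0 < u.re) :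
    squareTheta u = (jacobiTheta (Complex.I * (u / π)) - 1) / 2 := by
  have hpi : (π : ℂ) ≠ 0 := mod_cast Real.pi_ne_zero
  rw [← squareTheta_pi_mul (by rw [Complex.div_ofReal_re]; positivity), mul_div_cancel₀ _ hpi]

theorem norm_squareTheta_le {u : ℂ} (hu : 0 < u.re) :
    ‖squareTheta u‖ ≤ (Real.exp u.re - 1)⁻¹ := by
  have him : (Complex.I * (u / π)).im = u.re / π := by simp
  have hbound := norm_jacobiTheta_sub_one_le (him ▸ div_pos hu Real.pi_pos)
  have harg : -π * (u.re / π) = -u.re := by field_simp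
  rw [him, harg] at hbound
  rw [squareTheta_eq_jacobiTheta hu, norm_div, Complex.norm_ofNat, ← exp_neg_div_one_sub_exp_neg,
    div_le_iff₀ two_pos]
  exact hbound.trans_eq (by ring)

theorem continuousAt_squareTheta {u : ℂ} (hu : 0 < u.re) : ContinuousAt squareTheta u := by
  have him : 0 < (Complex.I * (u / π)).im := by simpa using div_pos hu Real.pi_pos
  have hJ : ContinuousAt (fun v : ℂ ↦ jacobiTheta (Complex.I * (v / π))) u :=
    ContinuousAt.comp (g := jacobiTheta) (f := fun v : ℂ ↦ Complex.I * (v / π))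
      (continuousAt_jacobiTheta him) (by fun_prop)
  have hext : ContinuousAt (fun v : ℂ ↦ (jacobiTheta (Complex.I * (v / π)) - 1) / 2) u := by
    fun_prop
  refine hext.congr ?_
  filter_upwards [(isOpen_lt continuous_const Complex.continuous_re).mem_nhds hu] with v hv
  exact (squareTheta_eq_jacobiTheta hv).symm

theorem jacobiTheta_I_mul {a : ℂ} (ha : 0 < a.re) :
    jacobiTheta (Complex.I * a) = 1 / a ^ (1 / 2 : ℂ) * jacobiTheta (Complex.I * (1 / a)) := by
  have hsum (b : ℂ) :
      jacobiTheta (Complex.I * b) = ∑' n : ℤ, Complex.exp (-π * b * (n : ℂ) ^ 2) :=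
    tsum_congr fun n ↦ congrArg Complex.exp <| by
      linear_combination (π * b * (n : ℂ) ^ 2) * Complex.I_sq
  rw [hsum a, hsum (1 / a), Complex.tsum_exp_neg_mul_int_sq ha]
  simp only [mul_one_div]

theorem one_div_div_pi_cpow_half {u : ℂ} (hu : u ≠ 0) :
    1 / (u / π) ^ (1 / 2 : ℂ) = √π * u ^ (-(1 / 2) : ℂ) := by
  have hroot : ((π⁻¹ : ℝ) : ℂ) ^ (1 / 2 : ℂ) = (√π : ℂ)⁻¹ := by
    have hcast : (1 / 2 : ℂ) = ((1 / 2 : ℝ) : ℂ) := by push_cast; rfl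
    rw [hcast, ← Complex.ofReal_cpow (by positivity), ← Real.sqrt_eq_rpow, Real.sqrt_inv,
      Complex.ofReal_inv]
  have hscale : u / π = ((π⁻¹ : ℝ) : ℂ) * u := by rw [Complex.ofReal_inv, div_eq_inv_mul]
  rw [hscale, ofReal_mul_cpow (by positivity) hu, hroot, Complex.cpow_neg, one_div, mul_inv,
    inv_inv]

theorem one_add_two_mul_squareTheta {u : ℂ} (hu : 0 < u.re) :
    1 + 2 * squareTheta u =
      √π * u ^ (-(1 / 2) : ℂ) * (1 + 2 * squareTheta ((π : ℂ) ^ 2 / u)) := by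
  have hpi : (π : ℂ) ≠ 0 := mod_cast Real.pi_ne_zero
  have hu₀ : u ≠ 0 := fun h ↦ by simp [h] at hu
  have hdual : (π : ℂ) ^ 2 / u / π = 1 / (u / π) := by field_simp
  have hre : 0 < (u / π).re := by rw [Complex.div_ofReal_re]; positivity
  rw [squareTheta_eq_jacobiTheta hu, squareTheta_eq_jacobiTheta (re_pi_sq_div_pos hu), hdual,
    ← one_div_div_pi_cpow_half hu₀]
  linear_combination jacobiTheta_I_mul hre

/-- The remainder `√(π / u) - 2 ψ(u) - exp (-u)` of the theta series `ψ = squareTheta`. The term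
`exp (-u)` replaces the constant `1` of the theta transformation, so that the remainder
vanishes at `0` and is still small at infinity. -/
noncomputable def thetaRemainder (u : ℂ) : ℂ :=
  √π * u ^ (-(1 / 2) : ℂ) - 2 * squareTheta u - Complex.exp (-u)

theorem continuousAt_thetaRemainder {u : ℂ} (hu : 0 < u.re) : ContinuousAt thetaRemainder u :=
  ((continuousAt_const.mul (continuousAt_id.cpow continuousAt_const (Or.inl hu))).sub
    (continuousAt_const.mul (continuousAt_squareTheta hu))).sub (by fun_prop)

theorem thetaRemainder_eq_one_sub_exp_sub {u : ℂ} (hu : 0 < u.re) :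
    thetaRemainder u = 1 - Complex.exp (-u) -
      2 * (√π * u ^ (-(1 / 2) : ℂ)) * squareTheta ((π : ℂ) ^ 2 / u) := by
  rw [thetaRemainder]
  linear_combination -one_add_two_mul_squareTheta hu

theorem sqrt_pi_le_two : √π ≤ 2 := by
  rw [Real.sqrt_le_left two_pos.le]
  linarith [Real.pi_le_four]

theorem norm_sqrt_pi_mul_cpow_le {u : ℂ} (hu : 0 < u.re) :
    ‖(√π : ℂ) * u ^ (-(1 / 2) : ℂ)‖ ≤ 2 * u.re ^ (-(1 / 2) : ℝ) := by
  rw [norm_mul, Complex.norm_of_nonneg (Real.sqrt_nonneg π)]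
  exact mul_le_mul sqrt_pi_le_two (norm_cpow_neg_half_le hu) (norm_nonneg _) two_pos.le

theorem four_div_re_le_re_pi_sq_div {u : ℂ} (hu : 0 < u.re) (him : |u.im| ≤ u.re) :
    4 / u.re ≤ ((π : ℂ) ^ 2 / u).re := by
  have hnormSq : Complex.normSq u ≤ 2 * u.re ^ 2 := by
    rw [Complex.normSq_apply]
    linarith [sq_le_sq' (neg_le_of_abs_le him) (le_of_abs_le him)]
  have hnormSq₀ : 0 < Complex.normSq u := Complex.normSq_pos.mpr fun h ↦ by simp [h] at hu
  have hpi : 8 ≤ π ^ 2 := by nlinarith [Real.pi_gt_three]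
  rw [← Complex.ofReal_pow, re_ofReal_div]
  calc 4 / u.re = 8 * u.re / (2 * u.re ^ 2) := by field_simp; norm_num
    _ ≤ π ^ 2 * u.re / Complex.normSq u := by gcongr

theorem norm_squareTheta_pi_sq_div_le {u : ℂ} (hu : 0 < u.re) (him : |u.im| ≤ u.re) :
    ‖squareTheta ((π : ℂ) ^ 2 / u)‖ ≤ u.re ^ 2 / 8 := by
  have hre := four_div_re_le_re_pi_sq_div hu him
  have hpos := re_pi_sq_div_pos hu
  calc ‖squareTheta ((π : ℂ) ^ 2 / u)‖ ≤ 2 / ((π : ℂ) ^ 2 / u).re ^ 2 :=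
        (norm_squareTheta_le hpos).trans (inv_exp_sub_one_le_two_div_sq hpos)
    _ ≤ 2 / (4 / u.re) ^ 2 := by gcongr
    _ = u.re ^ 2 / 8 := by field_simp; norm_num

theorem norm_thetaRemainder_le_of_re_le {u : ℂ} (hu : 0 < u.re) (him : |u.im| ≤ u.re)
    (h : u.re ≤ 1 / 2) : ‖thetaRemainder u‖ ≤ 5 * u.re := by
  have hnorm : ‖u‖ ≤ 2 * u.re := by
    have := Complex.norm_le_abs_re_add_abs_im u
    rw [abs_of_pos hu] at this
    linarith
  have hexp : ‖1 - Complex.exp (-u)‖ ≤ 4 * u.re := by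
    have := Complex.norm_exp_sub_one_le (x := -u) (by rw [norm_neg]; linarith)
    rw [norm_neg] at this
    rw [norm_sub_rev]
    linarith
  have hrpow : u.re ^ (-(1 / 2) : ℝ) ≤ u.re⁻¹ := by
    rw [← Real.rpow_neg_one]
    exact Real.rpow_le_rpow_of_exponent_ge hu (by linarith) (by norm_num)
  have hdual : ‖2 * (√π * u ^ (-(1 / 2) : ℂ)) * squareTheta ((π : ℂ) ^ 2 / u)‖ ≤ u.re := calc
    _ = 2 * ‖(√π : ℂ) * u ^ (-(1 / 2) : ℂ)‖ * ‖squareTheta ((π : ℂ) ^ 2 / u)‖ := by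
      rw [norm_mul, norm_mul 2, Complex.norm_ofNat]
    _ ≤ 2 * (2 * u.re⁻¹) * (u.re ^ 2 / 8) := by
      gcongr
      · exact (norm_sqrt_pi_mul_cpow_le hu).trans (by gcongr)
      · exact norm_squareTheta_pi_sq_div_le hu him
    _ ≤ u.re := by
      field_simp
      norm_num
  rw [thetaRemainder_eq_one_sub_exp_sub hu]
  linarith [norm_sub_le (1 - Complex.exp (-u))
    (2 * (√π * u ^ (-(1 / 2) : ℂ)) * squareTheta ((π : ℂ) ^ 2 / u))]

theorem norm_thetaRemainder_le_of_le_re {u : ℂ} (hu : 1 / 2 ≤ u.re) :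
    ‖thetaRemainder u‖ ≤ 8 * u.re ^ (-(1 / 2) : ℝ) := by
  have hre : 0 < u.re := by linarith
  have hinv : u.re⁻¹ ≤ 2 * u.re ^ (-(1 / 2) : ℝ) := by
    have hsplit : u.re⁻¹ = u.re ^ (-(1 / 2) : ℝ) * u.re ^ (-(1 / 2) : ℝ) := by
      rw [← Real.rpow_add hre, ← Real.rpow_neg_one]
      norm_num
    have hle : u.re⁻¹ ≤ 2 := inv_le_of_inv_le₀ two_pos (by linarith)
    have hpos : 0 < u.re ^ (-(1 / 2) : ℝ) := by positivity
    nlinarith [hsplit, hle, hpos]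
  have htheta : ‖squareTheta u‖ ≤ u.re⁻¹ :=
    (norm_squareTheta_le hre).trans (inv_exp_sub_one_le_inv hre)
  have hexp : ‖Complex.exp (-u)‖ ≤ u.re⁻¹ := by
    rw [Complex.norm_exp, Complex.neg_re, Real.exp_neg]
    gcongr
    linarith [Real.add_one_le_exp u.re]
  calc ‖thetaRemainder u‖
      ≤ ‖(√π : ℂ) * u ^ (-(1 / 2) : ℂ)‖ + 2 * ‖squareTheta u‖ + ‖Complex.exp (-u)‖ := by
        rw [← Complex.norm_ofNat 2, ← norm_mul]
        exact (norm_sub_le _ _).trans (add_le_add_left (norm_sub_le _ _) _)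
    _ ≤ 2 * u.re ^ (-(1 / 2) : ℝ) + 2 * u.re⁻¹ + u.re⁻¹ := by
      gcongr
      exact norm_sqrt_pi_mul_cpow_le hre
    _ ≤ 8 * u.re ^ (-(1 / 2) : ℝ) := by linarith

/-- An integrable decreasing majorant on `(0, ∞)` of `thetaRemainder u / u.re` over the sector
`|u.im| ≤ u.re`. -/
noncomputable def thetaMajorant (x : ℝ) : ℝ := 72 * (1 + x) ^ (-(3 / 2) : ℝ)

theorem integrableOn_thetaMajorant : IntegrableOn thetaMajorant (Set.Ioi 0) := by
  have h := (integrableOn_add_rpow_Ioi_of_lt (a := -(3 / 2)) (c := 0) (m := 1) (by norm_num)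
    (by norm_num)).const_mul 72
  exact h.congr (ae_of_all _ fun x ↦ by simp only [thetaMajorant, add_comm])

theorem antitoneOn_thetaMajorant : AntitoneOn thetaMajorant (Set.Ioi 0) := by
  intro x (hx : 0 < x) y _ hxy
  have := Real.rpow_le_rpow_of_nonpos (by linarith : 0 < 1 + x) (by linarith : 1 + x ≤ 1 + y)
    (by norm_num : (-(3 / 2) : ℝ) ≤ 0)
  simpa only [thetaMajorant] using mul_le_mul_of_nonneg_left this (by norm_num)

theorem five_le_thetaMajorant {x : ℝ} (hx : 0 < x) (h : x ≤ 1 / 2) : 5 ≤ thetaMajorant x := by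
  have : (1 / 4 : ℝ) ≤ (1 + x) ^ (-(3 / 2) : ℝ) := calc
    (1 / 4 : ℝ) = (2 : ℝ) ^ (-2 : ℝ) := by rw [Real.rpow_neg two_pos.le]; norm_num
    _ ≤ (2 : ℝ) ^ (-(3 / 2) : ℝ) :=
      Real.rpow_le_rpow_of_exponent_le one_le_two (by norm_num)
    _ ≤ (1 + x) ^ (-(3 / 2) : ℝ) :=
      Real.rpow_le_rpow_of_nonpos (by linarith) (by linarith) (by norm_num)
  rw [thetaMajorant]
  linarith

theorem eight_mul_rpow_le_mul_thetaMajorant {x : ℝ} (h : 1 / 2 ≤ x) :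
    8 * x ^ (-(1 / 2) : ℝ) ≤ x * thetaMajorant x := by
  have hx : 0 < x := by linarith
  have hthree : (1 / 9 : ℝ) ≤ (3 : ℝ) ^ (-(3 / 2) : ℝ) := calc
    (1 / 9 : ℝ) = (3 : ℝ) ^ (-2 : ℝ) := by rw [Real.rpow_neg (by norm_num)]; norm_num
    _ ≤ (3 : ℝ) ^ (-(3 / 2) : ℝ) :=
      Real.rpow_le_rpow_of_exponent_le (by norm_num) (by norm_num)
  calc 8 * x ^ (-(1 / 2) : ℝ) = 72 * x * (1 / 9 * x ^ (-(3 / 2) : ℝ)) := by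
        have : x ^ (-(1 / 2) : ℝ) = x ^ (-(3 / 2) : ℝ) * x := by
          rw [← Real.rpow_add_one hx.ne']
          norm_num
        rw [this]
        ring
    _ ≤ 72 * x * (3 ^ (-(3 / 2) : ℝ) * x ^ (-(3 / 2) : ℝ)) := by gcongr
    _ = 72 * x * (3 * x) ^ (-(3 / 2) : ℝ) := by rw [Real.mul_rpow (by norm_num) hx.le]
    _ ≤ 72 * x * (1 + x) ^ (-(3 / 2) : ℝ) := by
      gcongr 72 * x * ?_
      exact Real.rpow_le_rpow_of_nonpos (by linarith) (by linarith) (by norm_num)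
    _ = x * thetaMajorant x := by rw [thetaMajorant]; ring

theorem norm_thetaRemainder_div_le {u : ℂ} (hu : 0 < u.re) (him : |u.im| ≤ u.re) :
    ‖thetaRemainder u / (u.re : ℂ)‖ ≤ thetaMajorant u.re := by
  rw [norm_div, Complex.norm_of_nonneg hu.le, div_le_iff₀ hu]
  rcases le_total u.re (1 / 2) with h | h
  · exact (norm_thetaRemainder_le_of_re_le hu him h).trans
      (mul_le_mul_of_nonneg_right (five_le_thetaMajorant hu h) hu.le)
  · exact (norm_thetaRemainder_le_of_le_re h).trans
      ((eight_mul_rpow_le_mul_thetaMajorant h).trans_eq (mul_comm _ _))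

end ThetaRemainder

section RiemannSums

open MeasureTheory

theorem natCeil_div_of_mem_Ioc {t x : ℝ} (ht : 0 < t) {k : ℕ}
    (hx : x ∈ Set.Ioc (k * t) ((k + 1) * t)) : ⌈x / t⌉₊ = k + 1 := by
  rw [Nat.ceil_eq_iff (Nat.succ_ne_zero k), lt_div_iff₀ ht, div_le_iff₀ ht]
  simpa using hx

theorem iUnion_Ioc_natCast_mul {t : ℝ} (ht : 0 < t) :
    ⋃ k : ℕ, Set.Ioc (k * t) ((k + 1) * t) = Set.Ioi 0 := by
  ext x
  simp only [Set.mem_iUnion, Set.mem_Ioc, Set.mem_Ioi]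
  refine ⟨fun ⟨k, hk, _⟩ ↦ hk.trans_le' (by positivity), fun hx ↦ ?_⟩
  obtain ⟨k, hk⟩ : ∃ k, ⌈x / t⌉₊ = k + 1 :=
    Nat.exists_eq_add_one.mpr (Nat.ceil_pos.mpr (by positivity))
  rw [Nat.ceil_eq_iff (Nat.succ_ne_zero k), lt_div_iff₀ ht, div_le_iff₀ ht] at hk
  exact ⟨k, by simpa using hk⟩

theorem hasSum_smul_of_integrableOn_comp_natCeil {E : Type*} [NormedAddCommGroup E]
    [NormedSpace ℝ E] [CompleteSpace E] {t : ℝ} (ht : 0 < t) {f : ℕ → E}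
    (hf : IntegrableOn (fun x : ℝ ↦ f ⌈x / t⌉₊) (Set.Ioi 0)) :
    HasSum (fun k ↦ t • f (k + 1)) (∫ x in Set.Ioi (0 : ℝ), f ⌈x / t⌉₊) := by
  have hdisj : Pairwise (Function.onFun Disjoint
      fun k : ℕ ↦ Set.Ioc ((k : ℝ) * t) ((k + 1) * t)) := fun i j hij ↦
    Set.disjoint_left.mpr fun x hi hj ↦ hij <| Nat.succ_injective <|
      (natCeil_div_of_mem_Ioc ht hi).symm.trans (natCeil_div_of_mem_Ioc ht hj)
  have hsum := hasSum_integral_iUnion (fun _ ↦ measurableSet_Ioc) hdisj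
    (by rwa [iUnion_Ioc_natCast_mul ht])
  rw [iUnion_Ioc_natCast_mul ht] at hsum
  convert hsum using 2 with k
  calc t • f (k + 1) = ∫ _ in Set.Ioc ((k : ℝ) * t) ((k + 1) * t), f (k + 1) := by
        have hlen : (k + 1) * t - k * t = t := by ring
        rw [setIntegral_const, Real.volume_real_Ioc_of_le (by nlinarith), hlen]
    _ = ∫ x in Set.Ioc ((k : ℝ) * t) ((k + 1) * t), f ⌈x / t⌉₊ :=
      setIntegral_congr_fun measurableSet_Ioc fun x hx ↦
        (congrArg f (natCeil_div_of_mem_Ioc ht hx)).symm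

theorem tendsto_natCeil_div_mul {ι : Type*} {l : Filter ι} {t : ι → ℝ}
    (ht : ∀ᶠ i in l, 0 < t i) (ht₀ : Tendsto t l (𝓝 0)) {x : ℝ} (hx : 0 ≤ x) :
    Tendsto (fun i ↦ (⌈x / t i⌉₊ : ℝ) * t i) l (𝓝 x) := by
  have hupper : Tendsto (fun i ↦ x + t i) l (𝓝 x) := by simpa using ht₀.const_add x
  refine tendsto_of_tendsto_of_tendsto_of_le_of_le' tendsto_const_nhds hupper ?_ ?_
  · filter_upwards [ht] with i hi
    exact (div_le_iff₀ hi).mp (Nat.le_ceil _)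
  · filter_upwards [ht] with i hi
    have := mul_le_mul_of_nonneg_right (Nat.ceil_lt_add_one (div_nonneg hx hi.le)).le hi.le
    rwa [add_mul, div_mul_cancel₀ _ hi.ne', one_mul] at this

/-- The step function whose integral over `(0, ∞)` is the Riemann sum
`∑ thetaRemainder (k * z) / k`; its steps have width `z.re`. -/
noncomputable def thetaStep (z : ℂ) (x : ℝ) : ℂ :=
  thetaRemainder ((⌈x / z.re⌉₊ : ℂ) * z) / ((⌈x / z.re⌉₊ : ℝ) * z.re : ℝ)

theorem measurable_thetaStep (z : ℂ) : Measurable (thetaStep z) :=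
  (measurable_of_countable fun k : ℕ ↦ thetaRemainder (k * z) / ((k : ℝ) * z.re : ℝ)).comp
    (Nat.measurable_ceil.comp (measurable_id.div_const _))

theorem norm_thetaStep_le {z : ℂ} (hz : 0 < z.re) (him : |z.im| ≤ z.re) {x : ℝ} (hx : 0 < x) :
    ‖thetaStep z x‖ ≤ thetaMajorant x := by
  have hceil : (0 : ℝ) < ⌈x / z.re⌉₊ := mod_cast Nat.ceil_pos.mpr (by positivity)
  have hre : ((⌈x / z.re⌉₊ : ℂ) * z).re = ⌈x / z.re⌉₊ * z.re := by simp
  have hre₀ : 0 < ⌈x / z.re⌉₊ * z.re := by positivity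
  have hbound := norm_thetaRemainder_div_le (u := (⌈x / z.re⌉₊ : ℂ) * z) (hre ▸ hre₀) <| by
    rw [hre, ← Complex.ofReal_natCast, Complex.im_ofReal_mul, abs_mul, abs_of_pos hceil]
    gcongr
  rw [hre] at hbound
  exact hbound.trans <|
    antitoneOn_thetaMajorant hx hre₀ ((div_le_iff₀ hz).mp (Nat.le_ceil _))

theorem hasSum_thetaRemainder_div {z : ℂ} (hz : 0 < z.re) (him : |z.im| ≤ z.re) :
    HasSum (fun k : ℕ ↦ thetaRemainder ((k + 1 : ℂ) * z) / (k + 1 : ℂ))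
      (∫ x in Set.Ioi (0 : ℝ), thetaStep z x) := by
  have hint : IntegrableOn (thetaStep z) (Set.Ioi 0) := by
    refine integrableOn_thetaMajorant.mono' (measurable_thetaStep z).aestronglyMeasurable ?_
    filter_upwards [ae_restrict_mem measurableSet_Ioi] with x hx
    exact norm_thetaStep_le hz him hx
  have hsum := hasSum_smul_of_integrableOn_comp_natCeil hz
    (f := fun k ↦ thetaRemainder ((k : ℂ) * z) / ((k : ℝ) * z.re : ℝ)) hint
  refine hsum.congr_fun fun k ↦ ?_
  have hre : (z.re : ℂ) ≠ 0 := mod_cast hz.ne'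
  have hk : (k + 1 : ℂ) ≠ 0 := mod_cast Nat.succ_ne_zero k
  rw [Complex.real_smul]
  push_cast
  field_simp

/-- The Mellin-type integral `∫₀^∞ W(x) / x dx` of `W = thetaRemainder`, which is the constant
term of the expansion of `-2 * logGenFun` at `0`. -/
noncomputable def thetaIntegral : ℂ := ∫ x in Set.Ioi (0 : ℝ), thetaRemainder x / x

theorem tendsto_thetaStep {ι : Type*} {l : Filter ι} {z : ι → ℂ}
    (hz : ∀ᶠ i in l, 0 < (z i).re) (h₀ : Tendsto (fun i ↦ (z i).re) l (𝓝 0))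
    (h₁ : Tendsto (fun i ↦ z i / ((z i).re : ℂ)) l (𝓝 1)) {x : ℝ} (hx : 0 < x) :
    Tendsto (fun i ↦ thetaStep (z i) x) l (𝓝 (thetaRemainder x / x)) := by
  have hden : Tendsto (fun i ↦ (((⌈x / (z i).re⌉₊ : ℝ) * (z i).re : ℝ) : ℂ)) l (𝓝 (x : ℂ)) :=
    (Complex.continuous_ofReal.tendsto x).comp (tendsto_natCeil_div_mul hz h₀ hx.le)
  have harg : Tendsto (fun i ↦ (⌈x / (z i).re⌉₊ : ℂ) * z i) l (𝓝 (x : ℂ)) := by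
    have hmul := hden.mul h₁
    rw [mul_one] at hmul
    refine hmul.congr' ?_
    filter_upwards [hz] with i hi
    have hre : ((z i).re : ℂ) ≠ 0 := mod_cast hi.ne'
    push_cast
    field_simp
  have hcont : ContinuousAt thetaRemainder (x : ℂ) :=
    continuousAt_thetaRemainder (by simpa using hx)
  exact (hcont.tendsto.comp harg).div hden (mod_cast hx.ne')

theorem eventually_abs_im_le_re {ι : Type*} {l : Filter ι} {z : ι → ℂ}
    (hz : ∀ᶠ i in l, 0 < (z i).re) (h₁ : Tendsto (fun i ↦ z i / ((z i).re : ℂ)) l (𝓝 1)) :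
    ∀ᶠ i in l, |(z i).im| ≤ (z i).re := by
  have him : Tendsto (fun i ↦ |(z i).im / (z i).re|) l (𝓝 0) := by
    have := ((Complex.continuous_im.tendsto 1).comp h₁).abs
    simpa only [Function.comp_def, Complex.div_ofReal_im, Complex.one_im, abs_zero] using this
  filter_upwards [hz, him.eventually_le_const one_pos] with i hi hle
  rwa [abs_div, abs_of_pos hi, div_le_one hi] at hle

theorem tendsto_tsum_thetaRemainder_div {ι : Type*} {l : Filter ι} [l.IsCountablyGenerated]
    {z : ι → ℂ} (hz : ∀ᶠ i in l, 0 < (z i).re) (h₀ : Tendsto (fun i ↦ (z i).re) l (𝓝 0))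
    (h₁ : Tendsto (fun i ↦ z i / ((z i).re : ℂ)) l (𝓝 1)) :
    Tendsto (fun i ↦ ∑' k : ℕ, thetaRemainder ((k + 1 : ℂ) * z i) / (k + 1 : ℂ)) l
      (𝓝 thetaIntegral) := by
  have him := eventually_abs_im_le_re hz h₁
  have hlim : Tendsto (fun i ↦ ∫ x in Set.Ioi (0 : ℝ), thetaStep (z i) x) l
      (𝓝 thetaIntegral) := by
    refine tendsto_integral_filter_of_dominated_convergence thetaMajorant
      (.of_forall fun i ↦ (measurable_thetaStep _).aestronglyMeasurable) ?_
      integrableOn_thetaMajorant ?_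
    · filter_upwards [hz, him] with i hi himi
      filter_upwards [ae_restrict_mem measurableSet_Ioi] with x hx
      exact norm_thetaStep_le hi himi hx
    · filter_upwards [ae_restrict_mem measurableSet_Ioi] with x hx
      exact tendsto_thetaStep hz h₀ h₁ hx
  refine hlim.congr' ?_
  filter_upwards [hz, him] with i hi himi
  exact (hasSum_thetaRemainder_div hi himi).tsum_eq.symm

end RiemannSums

section LogGenFunExpansion

/-- The coefficient `√π ζ(3/2) / 2` of the leading term `z ^ (-1/2)` of `logGenFun` at `0`. -/
noncomputable def leadingCoeff : ℝ := √π / 2 * zetaThreeHalves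

theorem summable_rpow_neg_three_halves :
    Summable (fun m : ℕ ↦ (m + 1 : ℝ) ^ (-(3 / 2 : ℝ))) := by
  have h := (Real.summable_nat_rpow (p := -(3 / 2))).mpr (by norm_num)
  simpa using (summable_nat_add_iff 1).mpr h

theorem zetaThreeHalves_pos : 0 < zetaThreeHalves :=
  summable_rpow_neg_three_halves.tsum_pos (fun _ ↦ by positivity) 0 (by positivity)

theorem leadingCoeff_pos : 0 < leadingCoeff :=
  mul_pos (by positivity) zetaThreeHalves_pos

theorem natCast_mul_cpow_neg_half_div {z : ℂ} (hz : z ≠ 0) (k : ℕ) :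
    ((k + 1 : ℂ) * z) ^ (-(1 / 2) : ℂ) / (k + 1 : ℂ) =
      (((k + 1 : ℝ) ^ (-(3 / 2 : ℝ)) : ℝ) : ℂ) * z ^ (-(1 / 2) : ℂ) := by
  have hk : (0 : ℝ) < k + 1 := by positivity
  have hcast : (k + 1 : ℂ) = ((k + 1 : ℝ) : ℂ) := by push_cast; rfl
  have hpow : (k + 1 : ℝ) ^ (-(3 / 2 : ℝ)) = (k + 1 : ℝ) ^ (-(1 / 2) : ℝ) / (k + 1 : ℝ) := by
    rw [← Real.rpow_sub_one hk.ne']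
    norm_num
  rw [hcast, ofReal_mul_cpow hk hz, hpow, Complex.ofReal_div, Complex.ofReal_cpow hk.le]
  push_cast
  ring

theorem hasSum_sqrt_pi_mul_cpow_div {z : ℂ} (hz : z ≠ 0) :
    HasSum (fun k : ℕ ↦ √π * ((k + 1 : ℂ) * z) ^ (-(1 / 2) : ℂ) / (k + 1 : ℂ))
      (2 * leadingCoeff * z ^ (-(1 / 2) : ℂ)) := by
  have hzeta := (Complex.hasSum_ofReal.mpr summable_rpow_neg_three_halves.hasSum).mul_left
    (√π * z ^ (-(1 / 2) : ℂ))
  have hcoeff : 2 * leadingCoeff * z ^ (-(1 / 2) : ℂ) =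
      √π * z ^ (-(1 / 2) : ℂ) * (zetaThreeHalves : ℂ) := by
    rw [leadingCoeff]
    push_cast
    ring
  rw [hcoeff]
  refine hzeta.congr_fun fun k ↦ ?_
  rw [mul_div_assoc, natCast_mul_cpow_neg_half_div hz]
  ring

theorem logGenFun_eq {z : ℂ} (hz : 0 < z.re) (him : |z.im| ≤ z.re) :
    logGenFun z = leadingCoeff * z ^ (-(1 / 2) : ℂ) + Complex.log (1 - Complex.exp (-z)) / 2 -
      (∑' k : ℕ, thetaRemainder ((k + 1 : ℂ) * z) / (k + 1 : ℂ)) / 2 := by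
  have hz₀ : z ≠ 0 := fun h ↦ by simp [h] at hz
  have hlog := hasSum_pow_succ_div (norm_exp_neg_lt_one hz)
  have hsum := (((hasSum_sqrt_pi_mul_cpow_div hz₀).sub hlog).sub
    (hasSum_thetaRemainder_div hz him).summable.hasSum).div_const 2
  have hterm (k : ℕ) : squareTheta ((k + 1 : ℂ) * z) / (k + 1 : ℂ) =
      (√π * ((k + 1 : ℂ) * z) ^ (-(1 / 2) : ℂ) / (k + 1 : ℂ)
        - Complex.exp (-z) ^ (k + 1) / (k + 1 : ℂ)
        - thetaRemainder ((k + 1 : ℂ) * z) / (k + 1 : ℂ)) / 2 := by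
    rw [thetaRemainder, ← Complex.exp_nat_mul]
    push_cast
    ring_nf
  rw [logGenFun, tsum_congr hterm, hsum.tsum_eq]
  ring

theorem tendsto_one_sub_exp_neg_div :
    Tendsto (fun z : ℂ ↦ (1 - Complex.exp (-z)) / z) (𝓝[≠] 0) (𝓝 1) := by
  have hderiv : HasDerivAt (fun z : ℂ ↦ -Complex.exp (-z)) 1 0 := by
    simpa using ((hasDerivAt_neg (0 : ℂ)).cexp).fun_neg
  refine (hasDerivAt_iff_tendsto_slope.mp hderiv).congr fun z ↦ ?_
  simp only [slope_def_field, neg_zero, Complex.exp_zero, sub_zero]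
  ring

theorem log_mul_of_re_pos {z w : ℂ} (hz : 0 < z.re) (hw : 0 < w.re) :
    Complex.log (z * w) = Complex.log z + Complex.log w := by
  have hargz := abs_lt.mp (Complex.abs_arg_lt_pi_div_two_iff.mpr (Or.inl hz))
  have hargw := abs_lt.mp (Complex.abs_arg_lt_pi_div_two_iff.mpr (Or.inl hw))
  refine Complex.log_mul (fun h ↦ by simp [h] at hz) (fun h ↦ by simp [h] at hw) ⟨?_, ?_⟩ <;>
    linarith

theorem tendsto_log_one_sub_exp_neg_sub_log :
    Tendsto (fun z : ℂ ↦ Complex.log (1 - Complex.exp (-z)) - Complex.log z)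
      (𝓝[{z : ℂ | 0 < z.re}] 0) (𝓝 0) := by
  have hsubset : {z : ℂ | 0 < z.re} ⊆ {0}ᶜ := fun z (hz : 0 < z.re) h ↦ by
    simp [Set.mem_singleton_iff.mp h] at hz
  have hquot := tendsto_one_sub_exp_neg_div.mono_left (nhdsWithin_mono 0 hsubset)
  have hlog := (continuousAt_clog (x := 1) (by simp)).tendsto.comp hquot
  rw [Complex.log_one] at hlog
  refine hlog.congr' ?_
  filter_upwards [self_mem_nhdsWithin,
    ((Complex.continuous_re.tendsto 1).comp hquot).eventually_const_lt one_pos] with z hz hre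
  have hz₀ : z ≠ 0 := hsubset hz
  have hmul := log_mul_of_re_pos (w := (1 - Complex.exp (-z)) / z) hz hre
  rw [mul_div_cancel₀ _ hz₀] at hmul
  rw [hmul, Function.comp_apply, add_sub_cancel_left]

theorem tendsto_logGenFun_sub_sub_thetaIntegral {ι : Type*} {l : Filter ι}
    [l.IsCountablyGenerated] {z : ι → ℂ} (hz : ∀ᶠ i in l, 0 < (z i).re)
    (h₀ : Tendsto (fun i ↦ (z i).re) l (𝓝 0))
    (h₁ : Tendsto (fun i ↦ z i / ((z i).re : ℂ)) l (𝓝 1)) :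
    Tendsto (fun i ↦ logGenFun (z i) - leadingCoeff * z i ^ (-(1 / 2) : ℂ)
      - Complex.log (z i) / 2) l (𝓝 (-thetaIntegral / 2)) := by
  have hz₀ : Tendsto z l (𝓝[{z : ℂ | 0 < z.re}] 0) := by
    refine tendsto_nhdsWithin_iff.mpr ⟨?_, hz⟩
    have hmul := h₁.mul ((Complex.continuous_ofReal.tendsto 0).comp h₀)
    rw [Complex.ofReal_zero, mul_zero] at hmul
    refine hmul.congr' ?_
    filter_upwards [hz] with i hi
    exact div_mul_cancel₀ _ (mod_cast hi.ne')
  have hlim := ((tendsto_log_one_sub_exp_neg_sub_log.comp hz₀).div_const 2).sub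
    ((tendsto_tsum_thetaRemainder_div hz h₀ h₁).div_const 2)
  rw [zero_div, zero_sub, ← neg_div] at hlim
  refine hlim.congr' ?_
  filter_upwards [hz, eventually_abs_im_le_re hz h₁] with i hi him
  rw [logGenFun_eq hi him, Function.comp_apply]
  ring

end LogGenFunExpansion

section ThetaIntegral

open MeasureTheory

/-- The kernel `(1 - exp (-c v)) / v` of Frullani integrals. -/
noncomputable def frullaniKernel (c v : ℝ) : ℝ := (1 - Real.exp (-(c * v))) / v

theorem frullaniKernel_nonneg {c v : ℝ} (hc : 0 ≤ c) (hv : 0 < v) : 0 ≤ frullaniKernel c v := by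
  have : Real.exp (-(c * v)) ≤ 1 := Real.exp_le_one_iff.mpr (neg_nonpos.mpr (by positivity))
  exact div_nonneg (by linarith) hv.le

theorem frullaniKernel_le {c v : ℝ} (hv : 0 < v) : frullaniKernel c v ≤ c := by
  rw [frullaniKernel, div_le_iff₀ hv]
  linarith [Real.add_one_le_exp (-(c * v))]

theorem frullaniKernel_le_inv {c v : ℝ} (hv : 0 < v) : frullaniKernel c v ≤ v⁻¹ := by
  rw [frullaniKernel, div_eq_mul_inv]
  exact mul_le_of_le_one_left (by positivity) (by linarith [Real.exp_pos (-(c * v))])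

theorem continuousOn_frullaniKernel (c : ℝ) : ContinuousOn (frullaniKernel c) (Set.Ioi 0) :=
  ContinuousOn.div (by fun_prop) continuousOn_id fun _ hv ↦ (Set.mem_Ioi.mp hv).ne'

theorem frullaniKernel_mul_exp_neg (b c v : ℝ) : frullaniKernel c v * Real.exp (-(b * v)) =
    v⁻¹ * (Real.exp (-(b * v)) - Real.exp (-((b + c) * v))) := by
  rw [add_mul, neg_add, Real.exp_add, frullaniKernel]
  ring

theorem integrableOn_frullaniKernel_mul_exp_neg {b c : ℝ} (hb : 0 < b) (hc : 0 ≤ c) :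
    IntegrableOn (fun v ↦ frullaniKernel c v * Real.exp (-(b * v))) (Set.Ioi 0) := by
  have hexp : IntegrableOn (fun v : ℝ ↦ c * Real.exp (-(b * v))) (Set.Ioi 0) := by
    simpa only [neg_mul, IntegrableOn] using (exp_neg_integrableOn_Ioi 0 hb).const_mul c
  refine hexp.mono' ?_ ?_
  · exact ((continuousOn_frullaniKernel c).mul (by fun_prop)).aestronglyMeasurable
      measurableSet_Ioi
  · filter_upwards [ae_restrict_mem measurableSet_Ioi] with v hv
    rw [Real.norm_of_nonneg (mul_nonneg (frullaniKernel_nonneg hc hv) (Real.exp_pos _).le)]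
    exact mul_le_mul_of_nonneg_right (frullaniKernel_le hv) (Real.exp_pos _).le

theorem integral_frullaniKernel_mul_exp_neg {b c : ℝ} (hb : 0 < b) (hc : 0 ≤ c) :
    ∫ v in Set.Ioi (0 : ℝ), frullaniKernel c v * Real.exp (-(b * v)) = Real.log (1 + c / b) := by
  have hcont : Continuous fun x : ℝ ↦ Real.exp (-x) := by fun_prop
  have hint := integrableOn_frullaniKernel_mul_exp_neg hb hc
  simp only [frullaniKernel_mul_exp_neg] at hint ⊢
  have h := Frullani.integral_Ioi_eq (f := fun x : ℝ ↦ Real.exp (-x)) (L := 1) (R := 0)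
    (hcont.locallyIntegrable.locallyIntegrableOn _) hb (by positivity : 0 < b + c)
    (by simpa using (hcont.tendsto 0).mono_left nhdsWithin_le_nhds)
    Real.tendsto_exp_neg_atTop_nhds_zero hint
  simpa only [sub_zero, smul_eq_mul, mul_one, add_div, div_self hb.ne'] using h

theorem summable_log_one_add_div_sq {c : ℝ} (hc : 0 ≤ c) :
    Summable fun m : ℕ ↦ Real.log (1 + c / (m + 1 : ℝ) ^ 2) := by
  have hsq : Summable fun m : ℕ ↦ c * (1 / (m + 1 : ℝ) ^ 2) := by
    have := (summable_nat_add_iff 1).mpr (Real.summable_one_div_nat_pow.mpr one_lt_two)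
    simpa using this.mul_left c
  refine .of_nonneg_of_le (fun m ↦ Real.log_nonneg ?_) (fun m ↦ ?_) hsq
  · exact le_add_of_nonneg_right (by positivity)
  · rw [mul_one_div]
    linarith [Real.log_le_sub_one_of_pos (by positivity : 0 < 1 + c / (m + 1 : ℝ) ^ 2)]

theorem tsum_log_one_add_div_sq_eq_integral {c : ℝ} (hc : 0 ≤ c) :
    ∑' m : ℕ, Real.log (1 + c / (m + 1 : ℝ) ^ 2) = ∫ v in Set.Ioi (0 : ℝ),
      frullaniKernel c v * ∑' m : ℕ, Real.exp (-((m + 1 : ℝ) ^ 2 * v)) := by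
  have hint (m : ℕ) := integrableOn_frullaniKernel_mul_exp_neg
    (by positivity : 0 < (m + 1 : ℝ) ^ 2) hc
  have hlog (m : ℕ) := integral_frullaniKernel_mul_exp_neg
    (by positivity : 0 < (m + 1 : ℝ) ^ 2) hc
  have hnorm (m : ℕ) : ∫ v in Set.Ioi (0 : ℝ),
      ‖frullaniKernel c v * Real.exp (-((m + 1 : ℝ) ^ 2 * v))‖ =
        Real.log (1 + c / (m + 1 : ℝ) ^ 2) := by
    rw [← hlog]
    exact setIntegral_congr_fun measurableSet_Ioi fun v hv ↦
      Real.norm_of_nonneg (mul_nonneg (frullaniKernel_nonneg hc hv) (Real.exp_pos _).le)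
  have hsum := hasSum_integral_of_summable_integral_norm hint
    (by simpa only [hnorm] using summable_log_one_add_div_sq hc)
  simp only [hlog, tsum_mul_left] at hsum
  exact hsum.tsum_eq

theorem integrableOn_frullaniKernel_mul_rpow_neg_half {c : ℝ} (hc : 0 ≤ c) :
    IntegrableOn (fun v ↦ frullaniKernel c v * v ^ (-(1 / 2) : ℝ)) (Set.Ioi 0) := by
  have hmeas : AEStronglyMeasurable (fun v ↦ frullaniKernel c v * v ^ (-(1 / 2) : ℝ))
      (volume.restrict (Set.Ioi 0)) :=
    ((continuousOn_frullaniKernel c).mul fun v hv ↦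
      (Real.continuousAt_rpow_const _ _ (Or.inl (Set.mem_Ioi.mp hv).ne')).continuousWithinAt)
      |>.aestronglyMeasurable measurableSet_Ioi
  have hnorm {v : ℝ} (hv : 0 < v) : ‖frullaniKernel c v * v ^ (-(1 / 2) : ℝ)‖ =
      frullaniKernel c v * v ^ (-(1 / 2) : ℝ) :=
    Real.norm_of_nonneg (mul_nonneg (frullaniKernel_nonneg hc hv) (by positivity))
  rw [← Set.Ioc_union_Ioi_eq_Ioi zero_le_one]
  refine IntegrableOn.union ?_ ?_
  · have hrpow := intervalIntegral.intervalIntegrable_rpow' (a := 0) (b := 1)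
      (by norm_num : -1 < (-(1 / 2) : ℝ))
    rw [intervalIntegrable_iff_integrableOn_Ioc_of_le zero_le_one] at hrpow
    refine (hrpow.const_mul c).mono' (hmeas.mono_set Set.Ioc_subset_Ioi_self) ?_
    filter_upwards [ae_restrict_mem measurableSet_Ioc] with v hv
    have hv₀ : 0 < v := hv.1
    rw [hnorm hv₀]
    exact mul_le_mul_of_nonneg_right (frullaniKernel_le hv₀) (by positivity)
  · have hrpow : IntegrableOn (fun v : ℝ ↦ v ^ (-(3 / 2) : ℝ)) (Set.Ioi 1) :=
      integrableOn_Ioi_rpow_of_lt (by norm_num) one_pos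
    refine hrpow.mono' (hmeas.mono_set (Set.Ioi_subset_Ioi zero_le_one)) ?_
    filter_upwards [ae_restrict_mem measurableSet_Ioi] with v hv
    have hv₀ : 0 < v := one_pos.trans hv
    have hpow : v ^ (-(3 / 2) : ℝ) = v⁻¹ * v ^ (-(1 / 2) : ℝ) := by
      rw [← Real.rpow_neg_one, ← Real.rpow_add hv₀]
      norm_num
    rw [hnorm hv₀, hpow]
    exact mul_le_mul_of_nonneg_right (frullaniKernel_le_inv hv₀) (by positivity)

theorem integral_frullaniKernel_mul_rpow_neg_half {c : ℝ} (hc : 0 < c) :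
    ∫ v in Set.Ioi (0 : ℝ), frullaniKernel c v * v ^ (-(1 / 2) : ℝ) =
      √c * ∫ v in Set.Ioi (0 : ℝ), frullaniKernel 1 v * v ^ (-(1 / 2) : ℝ) := by
  have hscale : ∀ v ∈ Set.Ioi (0 : ℝ), frullaniKernel c v * v ^ (-(1 / 2) : ℝ) =
      c * √c * (frullaniKernel 1 (c * v) * (c * v) ^ (-(1 / 2) : ℝ)) := by
    intro v hv
    have hroot : c ^ (-(1 / 2) : ℝ) = (√c)⁻¹ := by
      rw [Real.rpow_neg hc.le, ← Real.sqrt_eq_rpow]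
    rw [Real.mul_rpow hc.le (Set.mem_Ioi.mp hv).le, hroot, frullaniKernel, frullaniKernel, one_mul]
    field_simp
  rw [setIntegral_congr_fun measurableSet_Ioi hscale, integral_const_mul,
    integral_comp_mul_left_Ioi (fun v ↦ frullaniKernel 1 v * v ^ (-(1 / 2) : ℝ)) 0 hc, mul_zero,
    smul_eq_mul]
  field_simp

/-- The restriction of `thetaRemainder` to the positive reals, as a real function. -/
noncomputable def realThetaRemainder (v : ℝ) : ℝ :=
  √π * v ^ (-(1 / 2) : ℝ) - 2 * ∑' m : ℕ, Real.exp (-((m + 1 : ℝ) ^ 2 * v)) - Real.exp (-v)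

theorem thetaRemainder_ofReal {v : ℝ} (hv : 0 < v) :
    thetaRemainder v = (realThetaRemainder v : ℂ) := by
  rw [thetaRemainder, squareTheta, realThetaRemainder]
  push_cast [Complex.ofReal_cpow hv.le]
  rfl

theorem thetaIntegral_eq_ofReal_integral :
    thetaIntegral = ((∫ v in Set.Ioi (0 : ℝ), realThetaRemainder v / v : ℝ) : ℂ) := by
  rw [thetaIntegral, ← integral_complex_ofReal]
  refine setIntegral_congr_fun measurableSet_Ioi fun v hv ↦ ?_
  simp only [thetaRemainder_ofReal hv, Complex.ofReal_div]

theorem continuousOn_realThetaRemainder : ContinuousOn realThetaRemainder (Set.Ioi 0) := by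
  have hre : ContinuousOn (fun v : ℝ ↦ (thetaRemainder v).re) (Set.Ioi 0) := fun v hv ↦
    (Complex.continuous_re.continuousAt.comp <| ContinuousAt.comp (g := thetaRemainder)
      (continuousAt_thetaRemainder (by simpa using hv))
      Complex.continuous_ofReal.continuousAt).continuousWithinAt
  exact hre.congr fun v hv ↦ by simp only [thetaRemainder_ofReal hv, Complex.ofReal_re]

theorem abs_realThetaRemainder_div_le {v : ℝ} (hv : 0 < v) :
    |realThetaRemainder v / v| ≤ thetaMajorant v := by
  have h := norm_thetaRemainder_div_le (u := v) (by simpa using hv) (by simpa using hv.le)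
  rwa [thetaRemainder_ofReal hv, Complex.ofReal_re, ← Complex.ofReal_div, Complex.norm_real] at h

theorem norm_frullaniKernel_mul_realThetaRemainder_le {c v : ℝ} (hc : 0 ≤ c) (hv : 0 < v) :
    ‖frullaniKernel c v * realThetaRemainder v‖ ≤ thetaMajorant v := by
  rw [norm_mul, Real.norm_of_nonneg (frullaniKernel_nonneg hc hv)]
  refine (mul_le_mul_of_nonneg_right (frullaniKernel_le_inv hv) (norm_nonneg _)).trans ?_
  rw [← Real.norm_of_nonneg (inv_nonneg.mpr hv.le), ← norm_mul, inv_mul_eq_div]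
  exact abs_realThetaRemainder_div_le hv

theorem aestronglyMeasurable_frullaniKernel_mul_realThetaRemainder (c : ℝ) :
    AEStronglyMeasurable (fun v ↦ frullaniKernel c v * realThetaRemainder v)
      (volume.restrict (Set.Ioi 0)) :=
  ((continuousOn_frullaniKernel c).mul continuousOn_realThetaRemainder).aestronglyMeasurable
    measurableSet_Ioi

theorem integrableOn_frullaniKernel_mul_realThetaRemainder {c : ℝ} (hc : 0 ≤ c) :
    IntegrableOn (fun v ↦ frullaniKernel c v * realThetaRemainder v) (Set.Ioi 0) := by
  refine integrableOn_thetaMajorant.mono'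
    (aestronglyMeasurable_frullaniKernel_mul_realThetaRemainder c) ?_
  filter_upwards [ae_restrict_mem measurableSet_Ioi] with v hv
  exact norm_frullaniKernel_mul_realThetaRemainder_le hc hv

theorem tendsto_integral_frullaniKernel_mul_realThetaRemainder :
    Tendsto (fun c : ℝ ↦ ∫ v in Set.Ioi (0 : ℝ), frullaniKernel c v * realThetaRemainder v)
      atTop (𝓝 (∫ v in Set.Ioi (0 : ℝ), realThetaRemainder v / v)) := by
  refine tendsto_integral_filter_of_dominated_convergence thetaMajorant
    (.of_forall aestronglyMeasurable_frullaniKernel_mul_realThetaRemainder) ?_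
    integrableOn_thetaMajorant ?_
  · filter_upwards [eventually_ge_atTop 0] with c hc
    filter_upwards [ae_restrict_mem measurableSet_Ioi] with v hv
    exact norm_frullaniKernel_mul_realThetaRemainder_le hc hv
  · filter_upwards [ae_restrict_mem measurableSet_Ioi] with v hv
    have hexp := Real.tendsto_exp_neg_atTop_nhds_zero.comp
      (tendsto_id.atTop_mul_const (Set.mem_Ioi.mp hv))
    have hlim := ((hexp.const_sub 1).div_const v).mul_const (realThetaRemainder v)
    rwa [sub_zero, one_div_mul_eq_div] at hlim

theorem two_mul_tsum_log_one_add_div_sq {c : ℝ} (hc : 0 < c) :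
    2 * ∑' m : ℕ, Real.log (1 + c / (m + 1 : ℝ) ^ 2) =
      √π * (∫ v in Set.Ioi (0 : ℝ), frullaniKernel 1 v * v ^ (-(1 / 2) : ℝ)) * √c
        - Real.log (1 + c)
        - ∫ v in Set.Ioi (0 : ℝ), frullaniKernel c v * realThetaRemainder v := by
  have hroot := (integrableOn_frullaniKernel_mul_rpow_neg_half hc.le).const_mul √π
  have hexp := integrableOn_frullaniKernel_mul_exp_neg one_pos hc.le
  have hrem := integrableOn_frullaniKernel_mul_realThetaRemainder hc.le
  have hlog := integral_frullaniKernel_mul_exp_neg one_pos hc.le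
  rw [div_one] at hlog
  have hdiff : IntegrableOn (fun v ↦ √π * (frullaniKernel c v * v ^ (-(1 / 2) : ℝ))
      - frullaniKernel c v * Real.exp (-(1 * v))) (Set.Ioi 0) := hroot.sub hexp
  rw [tsum_log_one_add_div_sq_eq_integral hc.le, mul_assoc √π, mul_comm _ √c,
    ← integral_frullaniKernel_mul_rpow_neg_half hc, ← integral_const_mul, ← integral_const_mul,
    ← hlog, ← integral_sub hroot hexp, ← integral_sub hdiff hrem]
  congr 1 with v
  rw [realThetaRemainder, one_mul]
  ring

theorem pi_mul_exp_tsum_log_eq_sinh (a : ℝ) :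
    π * a * Real.exp (∑' m : ℕ, Real.log (1 + a ^ 2 / (m + 1 : ℝ) ^ 2)) = Real.sinh (π * a) := by
  have hfactor (j : ℕ) : (1 : ℂ) - (a * Complex.I) ^ 2 / ((j : ℂ) + 1) ^ 2 =
      ((Real.exp (Real.log (1 + a ^ 2 / (j + 1 : ℝ) ^ 2)) : ℝ) : ℂ) := by
    rw [Real.exp_log (by positivity), mul_pow, Complex.I_sq]
    push_cast
    ring
  have heuler := (Complex.tendsto_euler_sin_prod (a * Complex.I)).mul_const (-Complex.I)
  have hsinh : Complex.sin (π * (a * Complex.I)) * -Complex.I = (Real.sinh (π * a) : ℂ) := by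
    rw [← mul_assoc, Complex.sin_mul_I]
    push_cast
    linear_combination (-Complex.sinh (π * a)) * Complex.I_sq
  have hprod (n : ℕ) : π * (a * Complex.I) * (∏ j ∈ Finset.range n,
      ((1 : ℂ) - (a * Complex.I) ^ 2 / ((j : ℂ) + 1) ^ 2)) * -Complex.I =
        ((π * a * Real.exp (∑ j ∈ Finset.range n, Real.log (1 + a ^ 2 / (j + 1 : ℝ) ^ 2)) : ℝ)
          : ℂ) := by
    simp only [hfactor, ← Complex.ofReal_prod, ← Real.exp_sum]
    push_cast
    linear_combination (-(π * a * Complex.exp (∑ j ∈ Finset.range n,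
      (Real.log (1 + a ^ 2 / (j + 1 : ℝ) ^ 2) : ℂ)))) * Complex.I_sq
  simp only [hsinh, hprod] at heuler
  refine tendsto_nhds_unique (Tendsto.const_mul _ <| (Real.continuous_exp.tendsto _).comp
    (summable_log_one_add_div_sq (sq_nonneg a)).hasSum.tendsto_sum_nat) ?_
  exact_mod_cast (Complex.continuous_re.tendsto _).comp heuler

theorem tsum_log_one_add_sq_div_sq {a : ℝ} (ha : 0 < a) :
    ∑' m : ℕ, Real.log (1 + a ^ 2 / (m + 1 : ℝ) ^ 2) =
      π * a + Real.log (1 - Real.exp (-(2 * π * a))) - Real.log (2 * π) - Real.log a := by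
  have hlt : Real.exp (-(2 * π * a)) < 1 :=
    Real.exp_lt_one_iff.mpr (neg_neg_of_pos (by positivity))
  have hsinh : Real.exp (∑' m : ℕ, Real.log (1 + a ^ 2 / (m + 1 : ℝ) ^ 2)) =
      Real.exp (π * a) * (1 - Real.exp (-(2 * π * a))) / (2 * π * a) := by
    have hexp : Real.exp (-(2 * π * a)) * Real.exp (π * a) = Real.exp (-(π * a)) := by
      rw [← Real.exp_add]
      ring_nf
    have h := pi_mul_exp_tsum_log_eq_sinh a
    rw [Real.sinh_eq] at h
    rw [eq_div_iff (by positivity)]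
    linear_combination 2 * h + hexp
  have hne : 1 - Real.exp (-(2 * π * a)) ≠ 0 := by linarith
  rw [← Real.log_exp (∑' _, _), hsinh, Real.log_div (mul_ne_zero (Real.exp_pos _).ne' hne)
    (by positivity), Real.log_mul (Real.exp_pos _).ne' hne, Real.log_exp,
    Real.log_mul (by positivity) ha.ne']
  ring

theorem tendsto_log_one_sub_exp_neg_mul_atTop {b : ℝ} (hb : 0 < b) :
    Tendsto (fun a : ℝ ↦ Real.log (1 - Real.exp (-(b * a)))) atTop (𝓝 0) := by
  have hexp := (Real.tendsto_exp_neg_atTop_nhds_zero.comp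
    (tendsto_id.const_mul_atTop hb)).const_sub 1
  rw [sub_zero] at hexp
  have hlog := (Real.continuousAt_log one_ne_zero).tendsto.comp hexp
  rwa [Real.log_one] at hlog

theorem eq_zero_of_tendsto_const_mul_atTop {ι : Type*} {l : Filter ι} [l.NeBot] {f : ι → ℝ}
    (hf : Tendsto f l atTop) {κ L : ℝ} (h : Tendsto (fun i ↦ κ * f i) l (𝓝 L)) : L = 0 := by
  rcases eq_or_ne κ 0 with rfl | hκ
  · simp only [zero_mul] at h
    exact tendsto_nhds_unique h tendsto_const_nhds
  · refine (not_tendsto_nhds_of_tendsto_atTop hf (κ⁻¹ * L) ?_).elim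
    simpa only [inv_mul_cancel_left₀ hκ] using h.const_mul κ⁻¹

-- The regularised integrals are computed by Euler's product for `sinh`. Their terms linear in `a`
-- cancel because the remaining ones converge, so `∫ frullaniKernel 1 v * v ^ (-1/2)` is not needed.
theorem integral_realThetaRemainder_div :
    ∫ v in Set.Ioi (0 : ℝ), realThetaRemainder v / v = 2 * Real.log (2 * π) := by
  set κ := ∫ v in Set.Ioi (0 : ℝ), frullaniKernel 1 v * v ^ (-(1 / 2) : ℝ)
  have hsq : Tendsto (fun a : ℝ ↦ a ^ 2) atTop atTop := tendsto_pow_atTop two_ne_zero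
  have hlog : Tendsto (fun a : ℝ ↦ Real.log (a ^ 2 + 1) - Real.log (a ^ 2)) atTop (𝓝 0) :=
    (Real.tendsto_log_comp_add_sub_log 1).comp hsq
  have hlim := (((tendsto_integral_frullaniKernel_mul_realThetaRemainder.comp hsq).const_sub
    (2 * Real.log (2 * π))).sub hlog).sub
      ((tendsto_log_one_sub_exp_neg_mul_atTop Real.two_pi_pos).const_mul 2)
  rw [mul_zero, sub_zero, sub_zero] at hlim
  refine (sub_eq_zero.mp (eq_zero_of_tendsto_const_mul_atTop (κ := 2 * π - √π * κ) tendsto_id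
    (hlim.congr' ?_))).symm
  filter_upwards [eventually_gt_atTop 0] with a ha
  have h := two_mul_tsum_log_one_add_div_sq (pow_pos ha 2)
  rw [tsum_log_one_add_sq_div_sq ha, Real.sqrt_sq ha.le, add_comm 1] at h
  rw [Function.comp_apply, Real.log_pow, id_eq]
  push_cast
  linear_combination -h

theorem tendsto_logGenFun_sub_sub {ι : Type*} {l : Filter ι} [l.IsCountablyGenerated]
    {z : ι → ℂ} (hz : ∀ᶠ i in l, 0 < (z i).re) (h₀ : Tendsto (fun i ↦ (z i).re) l (𝓝 0))
    (h₁ : Tendsto (fun i ↦ z i / ((z i).re : ℂ)) l (𝓝 1)) :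
    Tendsto (fun i ↦ logGenFun (z i) - leadingCoeff * z i ^ (-(1 / 2) : ℂ)
      - Complex.log (z i) / 2) l (𝓝 (-(Real.log (2 * π) : ℂ))) := by
  have hvalue : -thetaIntegral / 2 = -(Real.log (2 * π) : ℂ) := by
    rw [thetaIntegral_eq_ofReal_integral, integral_realThetaRemainder_div]
    push_cast
    ring
  exact hvalue ▸ tendsto_logGenFun_sub_sub_thetaIntegral hz h₀ h₁

end ThetaIntegral

section LocalExpansion

theorem isBigO_one_add_cpow_sub (a : ℂ) :
    (fun x : ℂ ↦ (1 + x) ^ a - (1 + a * x + a * (a - 1) / 2 * x ^ 2)) =O[𝓝 0]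
      fun x ↦ x ^ 3 := by
  have hchoose : Ring.choose a 2 = a * (a - 1) / 2 := by
    rw [Ring.choose_eq_smul, descPochhammer_succ_right, descPochhammer_one,
      ← Polynomial.aeval_eq_smeval]
    simp [Nat.factorial]
    ring
  have h := (Complex.one_add_cpow_hasFPowerSeriesAt_zero (a := a)).isBigO_sub_partialSum_pow 3
  simpa [FormalMultilinearSeries.partialSum, Finset.sum_range_succ, binomialSeries, hchoose,
    ← norm_pow, Asymptotics.isBigO_norm_right, mul_comm] using h

theorem tendsto_ofReal_mul_nhdsGT_zero (a : ℂ) :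
    Tendsto (fun τ : ℝ ↦ τ * a) (𝓝[>] 0) (𝓝 0) :=
  tendsto_nhdsWithin_of_tendsto_nhds <| Continuous.tendsto' (by fun_prop) 0 0 (by simp)

theorem tendsto_one_add_mul_cpow_neg_half (a : ℂ) :
    Tendsto (fun τ : ℝ ↦ ((1 + τ * a) ^ (-(1 / 2) : ℂ) - 1 + τ * a / 2) / τ ^ 2) (𝓝[>] 0)
      (𝓝 (3 / 8 * a ^ 2)) := by
  have hcube : (fun τ : ℝ ↦ (τ * a) ^ 3) =o[𝓝[>] 0] fun τ : ℝ ↦ (τ : ℂ) ^ 2 := by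
    have hofReal : Tendsto (fun τ : ℝ ↦ (τ : ℂ)) (𝓝[>] 0) (𝓝 0) := by
      simpa using tendsto_ofReal_mul_nhdsGT_zero 1
    simp only [mul_pow, mul_comm _ (a ^ 3)]
    exact ((Asymptotics.isLittleO_pow_pow (by norm_num)).comp_tendsto hofReal).const_mul_left _
  have h := ((isBigO_one_add_cpow_sub (-(1 / 2))).comp_tendsto
    (tendsto_ofReal_mul_nhdsGT_zero a)).trans_isLittleO hcube
    |>.tendsto_div_nhds_zero.add_const (3 / 8 * a ^ 2)
  rw [zero_add] at h
  refine h.congr' ?_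
  filter_upwards [self_mem_nhdsWithin] with τ hτ
  have hτ' : (τ : ℂ) ≠ 0 := mod_cast (Set.mem_Ioi.mp hτ).ne'
  rw [Function.comp_apply]
  field_simp
  ring

theorem ofReal_pow_four_cpow_neg_half {τ : ℝ} (hτ : 0 < τ) :
    ((τ ^ 4 : ℝ) : ℂ) ^ (-(1 / 2) : ℂ) = ((τ : ℂ) ^ 2)⁻¹ := by
  have hlog : Complex.log ((τ ^ 4 : ℝ) : ℂ) * (-(1 / 2)) = -Complex.log ((τ ^ 2 : ℝ) : ℂ) := by
    rw [← Complex.ofReal_log (by positivity), ← Complex.ofReal_log (by positivity), Real.log_pow,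
      Real.log_pow]
    push_cast
    ring
  have hpow (k : ℕ) : ((τ ^ k : ℝ) : ℂ) ≠ 0 := mod_cast (pow_pos hτ k).ne'
  rw [Complex.cpow_def_of_ne_zero (hpow 4), hlog, Complex.exp_neg, Complex.exp_log (hpow 2),
    Complex.ofReal_pow]

theorem tendsto_logGenFun_pow_four_mul (a : ℂ) :
    Tendsto (fun τ : ℝ ↦ logGenFun ((τ ^ 4 : ℝ) * (1 + τ * a))
      - leadingCoeff * (1 + τ * a) ^ (-(1 / 2) : ℂ) / τ ^ 2 - 2 * Real.log τ) (𝓝[>] 0)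
      (𝓝 (-(Real.log (2 * π) : ℂ))) := by
  have hself : Tendsto (fun τ : ℝ ↦ τ) (𝓝[>] 0) (𝓝 0) := nhdsWithin_le_nhds
  have hre (τ : ℝ) : ((τ ^ 4 : ℝ) * (1 + τ * a)).re = τ ^ 4 * (1 + τ * a.re) := by
    rw [Complex.re_ofReal_mul, Complex.add_re, Complex.one_re, Complex.re_ofReal_mul]
  have hw : Tendsto (fun τ : ℝ ↦ 1 + τ * a) (𝓝[>] 0) (𝓝 1) := by
    simpa using (tendsto_ofReal_mul_nhdsGT_zero a).const_add 1
  have hw_re : Tendsto (fun τ : ℝ ↦ 1 + τ * a.re) (𝓝[>] 0) (𝓝 1) := by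
    simpa using (hself.mul_const a.re).const_add 1
  have hw_re_pos : ∀ᶠ τ : ℝ in 𝓝[>] 0, 0 < 1 + τ * a.re := hw_re.eventually_const_lt one_pos
  have hlog : Tendsto (fun τ : ℝ ↦ Complex.log (1 + τ * a) / 2) (𝓝[>] 0) (𝓝 0) := by
    simpa using (hw.clog Complex.one_mem_slitPlane).div_const 2
  have h := (tendsto_logGenFun_sub_sub (l := 𝓝[>] (0 : ℝ))
    (z := fun τ ↦ (τ ^ 4 : ℝ) * (1 + τ * a)) ?_ ?_ ?_).add hlog
  · rw [add_zero] at h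
    refine h.congr' ?_
    filter_upwards [self_mem_nhdsWithin, hw_re_pos] with τ hτ hpos
    have hpos' : 0 < (1 + τ * a).re := by simpa using hpos
    rw [ofReal_mul_cpow (pow_pos hτ 4) (fun h₀ ↦ by simp [h₀] at hpos'),
      ofReal_pow_four_cpow_neg_half hτ, Complex.log_ofReal_mul (pow_pos hτ 4)
      (fun h₀ ↦ by simp [h₀] at hpos'), Real.log_pow]
    push_cast
    ring
  · filter_upwards [self_mem_nhdsWithin, hw_re_pos] with τ hτ hpos
    rw [hre]
    exact mul_pos (pow_pos hτ 4) hpos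
  · simp only [hre]
    simpa using (hself.pow 4).mul hw_re
  · have hdiv := hw.div ((Complex.continuous_ofReal.tendsto 1).comp hw_re) (by simp)
    rw [Complex.ofReal_one, div_one] at hdiv
    refine hdiv.congr' ?_
    filter_upwards [self_mem_nhdsWithin] with τ hτ
    have hτ' : (τ : ℂ) ≠ 0 := mod_cast (Set.mem_Ioi.mp hτ).ne'
    rw [hre, Complex.ofReal_mul, mul_div_mul_left _ _ (by simpa using hτ')]
    rfl

theorem tendsto_logGenFun_pow_four_mul_sub (a : ℂ) :
    Tendsto (fun τ : ℝ ↦ logGenFun ((τ ^ 4 : ℝ) * (1 + τ * a)) - logGenFun (τ ^ 4 : ℝ)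
      + leadingCoeff / 2 * a / τ) (𝓝[>] 0) (𝓝 (3 / 8 * leadingCoeff * a ^ 2)) := by
  have h := ((tendsto_logGenFun_pow_four_mul a).sub (tendsto_logGenFun_pow_four_mul 0)).add
    ((tendsto_one_add_mul_cpow_neg_half a).const_mul (leadingCoeff : ℂ))
  rw [sub_self, zero_add, mul_left_comm, ← mul_assoc] at h
  refine h.congr' ?_
  filter_upwards [self_mem_nhdsWithin] with τ hτ
  have hτ' : (τ : ℂ) ≠ 0 := mod_cast (Set.mem_Ioi.mp hτ).ne'
  rw [mul_zero, add_zero, Complex.one_cpow, mul_one]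
  field_simp
  ring

end LocalExpansion

section SaddlePoint

open MeasureTheory
open Complex (I)

theorem continuous_exp_logGenFun {t : ℝ} (ht : 0 < t) :
    Continuous fun θ : ℝ ↦ Complex.exp (logGenFun (t + θ * I)) := by
  have hsum (θ : ℝ) : ∑' n : ℕ, (pSq n : ℂ) * Complex.exp (-(t + θ * I)) ^ n =
      Complex.exp (logGenFun (t + θ * I)) :=
    (hasSum_pSq_mul_exp (by simpa using ht)).tsum_eq
  simp only [← hsum]
  exact continuous_tsum (fun n ↦ by fun_prop) (summable_pSq_mul_exp ht) fun n θ ↦ by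
    simp [Complex.norm_exp]

/-- The integrand of Cauchy's formula for `pSq n` on the circle of radius `exp (-t)`, normalized to
the value `1` at `θ = 0` and extended by zero outside `(-π, π]`. -/
noncomputable def circleIntegrand (n : ℕ) (t θ : ℝ) : ℂ :=
  (Set.Ioc (-π) π).indicator
    (fun θ ↦ Complex.exp (logGenFun (t + θ * I) - logGenFun t + n * θ * I)) θ

theorem measurable_circleIntegrand (n : ℕ) {t : ℝ} (ht : 0 < t) :
    Measurable (circleIntegrand n t) := by
  refine Measurable.indicator (Continuous.measurable ?_) measurableSet_Ioc
  simp only [Complex.exp_add, Complex.exp_sub]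
  have := continuous_exp_logGenFun ht
  fun_prop

theorem integral_circleIntegrand (n : ℕ) {t : ℝ} (ht : 0 < t) :
    ∫ θ, circleIntegrand n t θ =
      pSq n * (2 * π) / (Complex.exp (logGenFun t) * Complex.exp (n * t)) := by
  have hsplit (θ : ℝ) : Complex.exp (logGenFun (t + θ * I) - logGenFun t + n * θ * I) =
      Complex.exp (logGenFun (t + θ * I)) * Complex.exp (n * (t + θ * I))
        / (Complex.exp (logGenFun t) * Complex.exp (n * t)) := by
    rw [← Complex.exp_add, ← Complex.exp_add, ← Complex.exp_sub]
    ring_nf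
  simp only [circleIntegrand]
  rw [integral_indicator measurableSet_Ioc,
    ← intervalIntegral.integral_of_le (by linarith [Real.pi_pos])]
  simp only [hsplit, intervalIntegral.integral_div]
  rw [← pSq_mul_two_pi_eq_integral ht]

theorem exists_norm_circleIntegrand_le : ∃ K, ∀ (n : ℕ) (τ s : ℝ), 0 < τ → τ ≤ 1 / 2 →
    ‖circleIntegrand n (τ ^ 4) (τ ^ 5 * s)‖ ≤ K * (1 + s ^ 2)⁻¹ := by
  obtain ⟨K, hK⟩ := exists_exp_logGenFun_re_sub_mul_le
  have hK₀ : 0 ≤ K :=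
    le_trans (by positivity) (hK (1 / 2) 0 (by norm_num) le_rfl (by simpa using Real.pi_pos.le))
  refine ⟨K, fun n τ s hτ hτ' ↦ ?_⟩
  by_cases hs : τ ^ 5 * s ∈ Set.Ioc (-π) π
  · have hbound := hK τ (τ ^ 5 * s) hτ hτ' (abs_le.mpr ⟨hs.1.le, hs.2⟩)
    rw [mul_div_cancel_left₀ _ (pow_pos hτ 5).ne'] at hbound
    rw [circleIntegrand, Set.indicator_of_mem hs, Complex.norm_exp, ← div_eq_mul_inv,
      le_div_iff₀ (by positivity)]
    refine le_trans (le_of_eq ?_) hbound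
    rw [Complex.add_re, Complex.sub_re, Complex.mul_I_re, ← Complex.ofReal_natCast,
      ← Complex.ofReal_mul, Complex.ofReal_im, neg_zero, add_zero]
  · rw [circleIntegrand, Set.indicator_of_notMem hs, norm_zero]
    positivity

/-- The fourth root of the positive saddle point of `z ↦ leadingCoeff * z ^ (-1/2) + n * z`.
In terms of `τ = saddleRoot n` the circle of Cauchy's formula has radius `exp (-τ ^ 4)`, and the
integrand concentrates at the scale `τ ^ 5`. -/
noncomputable def saddleRoot (n : ℕ) : ℝ := (leadingCoeff / 2 / n) ^ (1 / 6 : ℝ)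

theorem saddleRoot_pos {n : ℕ} (hn : n ≠ 0) : 0 < saddleRoot n := by
  have := leadingCoeff_pos
  exact Real.rpow_pos_of_pos (by positivity) _

theorem mul_saddleRoot_pow_six {n : ℕ} (hn : n ≠ 0) : n * saddleRoot n ^ 6 = leadingCoeff / 2 := by
  have := leadingCoeff_pos
  rw [saddleRoot, ← Real.rpow_natCast, ← Real.rpow_mul (by positivity)]
  norm_num
  field_simp

theorem tendsto_saddleRoot : Tendsto saddleRoot atTop (𝓝[>] 0) := by
  refine tendsto_nhdsWithin_iff.mpr ⟨?_, ?_⟩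
  · have h := (tendsto_natCast_atTop_atTop (R := ℝ)).const_div_atTop (leadingCoeff / 2)
    have hroot := h.rpow_const (p := 1 / 6) (Or.inr (by norm_num))
    rwa [Real.zero_rpow (by norm_num)] at hroot
  · filter_upwards [eventually_ne_atTop 0] with n hn using saddleRoot_pos hn

theorem tendsto_circleIntegrand (s : ℝ) :
    Tendsto (fun n ↦ circleIntegrand n (saddleRoot n ^ 4) (saddleRoot n ^ 5 * s)) atTop
      (𝓝 (Real.exp (-(3 / 8 * leadingCoeff) * s ^ 2) : ℂ)) := by
  have hlim := ((tendsto_logGenFun_pow_four_mul_sub (s * I)).comp tendsto_saddleRoot).cexp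
  have hvalue : 3 / 8 * (leadingCoeff : ℂ) * (s * I) ^ 2 =
      ((-(3 / 8 * leadingCoeff) * s ^ 2 : ℝ) : ℂ) := by
    rw [mul_pow, Complex.I_sq]
    push_cast
    ring
  rw [hvalue, ← Complex.ofReal_exp] at hlim
  refine hlim.congr' ?_
  have hzero : Tendsto (fun n ↦ saddleRoot n ^ 5 * s) atTop (𝓝 0) := by
    simpa using ((tendsto_nhds_of_tendsto_nhdsWithin tendsto_saddleRoot).pow 5).mul_const s
  filter_upwards [hzero.eventually_mem (Ioc_mem_nhds (neg_neg_of_pos Real.pi_pos) Real.pi_pos),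
    eventually_ne_atTop 0] with n hmem hn
  have hτ : (saddleRoot n : ℂ) ≠ 0 := mod_cast (saddleRoot_pos hn).ne'
  have hsaddle : (n : ℂ) * saddleRoot n ^ 6 = leadingCoeff / 2 :=
    mod_cast mul_saddleRoot_pow_six hn
  rw [circleIntegrand, Set.indicator_of_mem hmem, Function.comp_apply, ← hsaddle]
  push_cast
  congr 2
  · ring_nf
  · field_simp

theorem tendsto_integral_circleIntegrand :
    Tendsto (fun n ↦ ∫ s, circleIntegrand n (saddleRoot n ^ 4) (saddleRoot n ^ 5 * s)) atTop
      (𝓝 (√(π / (3 / 8 * leadingCoeff)) : ℂ)) := by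
  obtain ⟨K, hK⟩ := exists_norm_circleIntegrand_le
  rw [← integral_gaussian, ← integral_complex_ofReal]
  refine tendsto_integral_filter_of_dominated_convergence (fun s ↦ K * (1 + s ^ 2)⁻¹) ?_ ?_
    (integrable_inv_one_add_sq.const_mul K) (ae_of_all _ tendsto_circleIntegrand)
  · filter_upwards [eventually_ne_atTop 0] with n hn
    exact ((measurable_circleIntegrand n (pow_pos (saddleRoot_pos hn) 4)).comp
      (measurable_const_mul _)).aestronglyMeasurable
  · have hle := (tendsto_nhds_of_tendsto_nhdsWithin tendsto_saddleRoot).eventually_le_const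
      (by norm_num : (0 : ℝ) < 1 / 2)
    filter_upwards [hle, eventually_ne_atTop 0] with n hle hn
    exact ae_of_all _ fun s ↦ hK n _ s (saddleRoot_pos hn) hle

theorem tendsto_exp_logGenFun_div :
    Tendsto (fun τ : ℝ ↦ Complex.exp (logGenFun (τ ^ 4 : ℝ))
      / (Complex.exp (leadingCoeff / τ ^ 2) * τ ^ 2)) (𝓝[>] 0) (𝓝 (2 * π : ℂ)⁻¹) := by
  have hvalue : Complex.exp (-(Real.log (2 * π) : ℂ)) = (2 * π : ℂ)⁻¹ := by
    rw [Complex.exp_neg, ← Complex.ofReal_exp, Real.exp_log Real.two_pi_pos]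
    push_cast
    rfl
  have hlim := (tendsto_logGenFun_pow_four_mul 0).cexp
  rw [hvalue] at hlim
  refine hlim.congr' ?_
  filter_upwards [self_mem_nhdsWithin] with τ hτ
  have hsq : Complex.exp (2 * Real.log τ) = (τ : ℂ) ^ 2 := by
    rw [two_mul, Complex.exp_add, ← Complex.ofReal_exp, Real.exp_log hτ, sq]
  rw [mul_zero, add_zero, Complex.one_cpow, mul_one, mul_one, Complex.exp_sub, Complex.exp_sub,
    hsq, div_div]

theorem tendsto_pSq_div_saddleRoot :
    Tendsto (fun n ↦ (pSq n : ℝ) /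
      (saddleRoot n ^ 7 * Real.exp (3 / 2 * leadingCoeff / saddleRoot n ^ 2))) atTop
      (𝓝 (√(π / (3 / 8 * leadingCoeff)) / (2 * π) ^ 2)) := by
  have hlim := (tendsto_integral_circleIntegrand.mul
    (tendsto_exp_logGenFun_div.comp tendsto_saddleRoot)).div_const (2 * π : ℂ)
  rw [← div_eq_mul_inv, div_div, ← sq] at hlim
  rw [← tendsto_ofReal_iff]
  push_cast
  refine hlim.congr' ?_
  filter_upwards [eventually_ne_atTop 0] with n hn
  have hpos := saddleRoot_pos hn
  have hτ : (saddleRoot n : ℂ) ≠ 0 := mod_cast hpos.ne'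
  have hsaddle : (n : ℂ) * saddleRoot n ^ 6 = leadingCoeff / 2 :=
    mod_cast mul_saddleRoot_pow_six hn
  have hexp : Complex.exp (3 / 2 * leadingCoeff / saddleRoot n ^ 2) =
      Complex.exp (n * (saddleRoot n ^ 4 : ℝ)) * Complex.exp (leadingCoeff / saddleRoot n ^ 2) := by
    rw [← Complex.exp_add]
    congr 1
    push_cast
    field_simp
    linear_combination -2 * hsaddle
  rw [Measure.integral_comp_mul_left (circleIntegrand n (saddleRoot n ^ 4)) (saddleRoot n ^ 5),
    integral_circleIntegrand n (pow_pos hpos 4), abs_of_pos (by positivity), Complex.real_smul,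
    Function.comp_apply, hexp]
  have := Complex.exp_ne_zero
  push_cast
  field_simp

end SaddlePoint

section Constants

theorem leadingCoeff_sq : 4 * leadingCoeff ^ 2 = π * zetaThreeHalves ^ 2 := by
  rw [leadingCoeff, mul_pow, div_pow, Real.sq_sqrt Real.pi_pos.le]
  ring

theorem exponent_eq_saddleRoot {n : ℕ} (hn : n ≠ 0) :
    3 / 2 ^ ((4 : ℝ) / 3) * π ^ ((1 : ℝ) / 3) * zetaThreeHalves ^ ((2 : ℝ) / 3) *
      (n : ℝ) ^ ((1 : ℝ) / 3) = 3 / 2 * leadingCoeff / saddleRoot n ^ 2 := by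
  have hζ := zetaThreeHalves_pos
  have hC := leadingCoeff_pos
  have hτ := saddleRoot_pos hn
  have hsaddle := mul_saddleRoot_pow_six hn
  refine (pow_left_inj₀ (by positivity) (by positivity) three_ne_zero).mp ?_
  simp only [mul_pow, div_pow, ← Real.rpow_mul_natCast Real.pi_pos.le,
    ← Real.rpow_mul_natCast hζ.le, ← Real.rpow_mul_natCast n.cast_nonneg,
    ← Real.rpow_mul_natCast zero_le_two]
  norm_num
  field_simp
  linear_combination 8 * π * zetaThreeHalves ^ 2 * hsaddle - 4 * leadingCoeff * leadingCoeff_sq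

theorem prefactor_eq_saddleRoot {n : ℕ} (hn : n ≠ 0) :
    zetaThreeHalves ^ ((2 : ℝ) / 3) /
      (2 ^ ((7 : ℝ) / 3) * √3 * π ^ ((7 : ℝ) / 6) * (n : ℝ) ^ ((7 : ℝ) / 6)) =
        saddleRoot n ^ 7 * (√(π / (3 / 8 * leadingCoeff)) / (2 * π) ^ 2) := by
  have hζ := zetaThreeHalves_pos
  have hC := leadingCoeff_pos
  have hτ := saddleRoot_pos hn
  have hsqrt {x : ℝ} (hx : 0 ≤ x) : √x ^ 6 = x ^ 3 := by
    rw [← Real.sq_sqrt hx, ← pow_mul, Real.sqrt_sq x.sqrt_nonneg]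
  have hN : (n : ℝ) ^ 7 * saddleRoot n ^ 42 = (leadingCoeff / 2) ^ 7 := by
    rw [← mul_saddleRoot_pow_six hn]
    ring
  have hC₄ : 16 * leadingCoeff ^ 4 = π ^ 2 * zetaThreeHalves ^ 4 := by
    linear_combination (4 * leadingCoeff ^ 2 + π * zetaThreeHalves ^ 2) * leadingCoeff_sq
  refine (pow_left_inj₀ (by positivity) (by positivity) (by norm_num : 6 ≠ 0)).mp ?_
  rw [div_pow]
  simp only [mul_pow, div_pow, ← Real.rpow_mul_natCast Real.pi_pos.le,
    ← Real.rpow_mul_natCast hζ.le, ← Real.rpow_mul_natCast n.cast_nonneg,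
    ← Real.rpow_mul_natCast zero_le_two, hsqrt zero_le_three,
    hsqrt (by positivity : 0 ≤ π / (3 / 8 * leadingCoeff))]
  norm_num
  field_simp
  linear_combination -(27 * 4096 * leadingCoeff ^ 3) * hC₄ - 442368 * 512 * hN

end Constants

end SquarePartition

theorem stmt17 :
    Tendsto (fun n : ℕ => (pSq n : ℝ) /
        (zetaThreeHalves ^ ((2 : ℝ) / 3) /
            (2 ^ ((7 : ℝ) / 3) * Real.sqrt 3 * Real.pi ^ ((7 : ℝ) / 6) * (n : ℝ) ^ ((7 : ℝ) / 6)) *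
          Real.exp ((3 / 2 ^ ((4 : ℝ) / 3)) * Real.pi ^ ((1 : ℝ) / 3) *
            zetaThreeHalves ^ ((2 : ℝ) / 3) * (n : ℝ) ^ ((1 : ℝ) / 3))))
      atTop (𝓝 1) := by
  have hC := SquarePartition.leadingCoeff_pos
  have hlim := SquarePartition.tendsto_pSq_div_saddleRoot.div_const
    (√(Real.pi / (3 / 8 * SquarePartition.leadingCoeff)) / (2 * Real.pi) ^ 2)
  rw [div_self (by positivity)] at hlim
  refine hlim.congr' ?_
  filter_upwards [eventually_ne_atTop 0] with n hn
  rw [SquarePartition.prefactor_eq_saddleRoot hn, SquarePartition.exponent_eq_saddleRoot hn,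
    div_div, mul_right_comm]
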